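/- arXiv:2303.05494 — 5 statements merged into one kernel-verified Lean document; each statement's English description precedes it below -/
import Mathlib

section
/- For all ε ∈ ℝ, all Schwartz functions f, g : ℝ² → ℂ, and every point (x,y) ∈ ℝ², the commutator semiclassical asymptotics hold and are independent of ε: lim_{ℏ → 0⁺} [ (f ⋆_{ℏ,ε} g)(x,y) − (g ⋆_{ℏ,ε} f)(x,y) ] / ℏ = −2i·{f,g}(x,y). -/
open MeasureTheory Complex Filter

/-- The ε-deformed kernel at base point `m = (x,y)`, on `a = (x'',y'')`, `b = (x',y')`:
`exp((i/ℏ)·[(x''−x)(y−y') − (y''−y)(x−x') + ε(y·y' − y'·y'' + y·y'' − y²)])`. -/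
noncomputable def epsKernel (ℏ ε : ℝ) (m a b : ℝ × ℝ) : ℂ :=
  Complex.exp (Complex.I / ℏ *
    (((a.1 - m.1) * (m.2 - b.2) - (a.2 - m.2) * (m.1 - b.1)
      + ε * (m.2 * b.2 - b.2 * a.2 + m.2 * a.2 - m.2 ^ 2) : ℝ) : ℂ))

/-- The ε-deformed product `(f ⋆_{ℏ,ε} g)(x,y)`. -/
noncomputable def moyalEps (ℏ ε : ℝ) (f g : ℝ × ℝ → ℂ) : ℝ × ℝ → ℂ :=
  fun m => ((2 * Real.pi * ℏ) ^ 2 : ℝ)⁻¹ •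
    ∫ ab : (ℝ × ℝ) × (ℝ × ℝ), f ab.1 * g ab.2 * epsKernel ℏ ε m ab.1 ab.2

/-- Partial derivative in the first (x) variable. -/
noncomputable def pderivX (f : ℝ × ℝ → ℂ) (m : ℝ × ℝ) : ℂ := fderiv ℝ f m (1, 0)

/-- Partial derivative in the second (y) variable. -/
noncomputable def pderivY (f : ℝ × ℝ → ℂ) (m : ℝ × ℝ) : ℂ := fderiv ℝ f m (0, 1)

/-- The Poisson bracket `{f,g} = ∂ₓf·∂_yg − ∂_yf·∂ₓg` on ℝ². -/
noncomputable def pbracket (f g : ℝ × ℝ → ℂ) (m : ℝ × ℝ) : ℂ :=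
  pderivX f m * pderivY g m - pderivY f m * pderivX g m

/-!
In coordinates centred at `m`, the phase of the kernel is `1 / ℏ` times a nondegenerate bilinear
form. Integrating out the second variable therefore produces the Fourier transform of `g`, and a
rescaling moves `ℏ` into the argument of `f`:
`(f ⋆ g)(m) = ∫ f (m + 2πℏ A_ε ξ) * 𝓕 (g (m + ·)) ξ dξ`,
with `A_ε` linear and volume preserving. This expression is differentiable at `ℏ = 0`, and Fourier
inversion turns its derivative into a bidifferential operator:
`(f ⋆ g)(m) = (f g)(m) - iℏ ({f, g} + ε ∂ₓf ∂ₓg)(m) + o(ℏ)`.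
The `ε`-term is symmetric in `f` and `g`, so it drops out of the commutator.
-/

open scoped FourierTransform SchwartzMap RealInnerProductSpace LineDeriv NNReal Topology Real

section DerivativeUnderIntegral

variable {α E R F : Type*} [MeasurableSpace α] {μ : Measure α}
  [NormedAddCommGroup E] [NormedSpace ℝ E] [NormedRing R] [NormedAlgebra ℝ R]
  [NormedAddCommGroup F] [NormedSpace ℝ F] [Module R F] [IsBoundedSMul R F] [IsScalarTower ℝ R F]

theorem hasDerivAt_integral_comp_add_smul {f : E → R} {f' : E →L[ℝ] R} {x : E} {C : ℝ≥0}
    (hLip : LipschitzWith C f) (hf : HasFDerivAt f f' x) {u : α → E} {h : α → F}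
    (hu : AEStronglyMeasurable u μ) (hh : Integrable h μ)
    (huh : Integrable (fun a ↦ ‖u a‖ * ‖h a‖) μ) :
    HasDerivAt (fun t : ℝ ↦ ∫ a, f (x + t • u a) • h a ∂μ) (∫ a, f' (u a) • h a ∂μ) 0 := by
  have hmeas (t : ℝ) : AEStronglyMeasurable (fun a ↦ f (x + t • u a) • h a) μ :=
    (hLip.continuous.comp_aestronglyMeasurable
      ((hu.const_smul t).const_add x)).smul hh.aestronglyMeasurable
  have hintegrable : Integrable (fun a ↦ f (x + (0 : ℝ) • u a) • h a) μ := by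
    simp only [zero_smul, add_zero]
    exact hh.smul (f x)
  have hLip_integrand (a : α) : LipschitzWith (Real.nnabs (C * (‖u a‖ * ‖h a‖)))
      fun t : ℝ ↦ f (x + t • u a) • h a := by
    refine LipschitzWith.of_dist_le_mul fun s t ↦ ?_
    rw [dist_eq_norm, ← sub_smul, Real.coe_nnabs, abs_of_nonneg (by positivity)]
    calc ‖(f (x + s • u a) - f (x + t • u a)) • h a‖
        ≤ C * ‖s • u a - t • u a‖ * ‖h a‖ := by
          refine (norm_smul_le _ _).trans ?_
          gcongr
          simpa using hLip.norm_sub_le (x + s • u a) (x + t • u a)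
      _ = C * (‖u a‖ * ‖h a‖) * dist s t := by
          rw [← sub_smul, norm_smul, Real.dist_eq, Real.norm_eq_abs]
          ring
  have hderiv (a : α) : HasDerivAt (fun t : ℝ ↦ f (x + t • u a) • h a) (f' (u a) • h a) 0 :=
    HasDerivAt.smul_const (hf.hasLineDerivAt (u a)) (h a)
  exact (hasDerivAt_integral_of_dominated_loc_of_lip univ_mem (.of_forall hmeas) hintegrable
    ((f'.continuous.comp_aestronglyMeasurable hu).smul hh.aestronglyMeasurable)
    (.of_forall fun a ↦ (hLip_integrand a).lipschitzOnWith) (huh.const_mul _)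
    (.of_forall hderiv)).2

end DerivativeUnderIntegral

theorem exists_lipschitzWith_schwartz {E F : Type*} [NormedAddCommGroup E] [NormedSpace ℝ E]
    [NormedAddCommGroup F] [NormedSpace ℝ F] (f : 𝓢(E, F)) : ∃ C, LipschitzWith C f := by
  obtain ⟨C, hC, hbound⟩ := f.decay 0 1
  exact ⟨⟨C, hC.le⟩, lipschitzWith_of_nnnorm_fderiv_le (𝕜 := ℝ) f.differentiable fun x ↦ by
    simpa [norm_iteratedFDeriv_one] using! hbound x⟩

section FourierMoments

variable {V F : Type*} [NormedAddCommGroup V] [InnerProductSpace ℝ V] [FiniteDimensional ℝ V]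
  [MeasurableSpace V] [BorelSpace V] [NormedAddCommGroup F] [NormedSpace ℂ F]

theorem integral_fourier_schwartz [CompleteSpace F] (k : 𝓢(V, F)) : ∫ v, 𝓕 k v = k 0 := by
  calc ∫ v, 𝓕 k v = 𝓕⁻ (𝓕 k) 0 := by
        rw [SchwartzMap.fourierInv_coe, Real.fourierInv_eq]
        simp
    _ = k 0 := by rw [FourierTransform.fourierInv_fourier_eq]

theorem integral_inner_smul_fourier_schwartz [CompleteSpace F] (k : 𝓢(V, F)) (w : V) :
    ∫ v, ⟪v, w⟫ • 𝓕 k v = (2 * π * I)⁻¹ • fderiv ℝ k 0 w := by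
  rw [eq_inv_smul_iff₀ two_pi_I_ne_zero, ← integral_smul]
  calc ∫ v, (2 * π * I : ℂ) • ⟪v, w⟫ • 𝓕 k v
      = ∫ v, 𝓕 (∂_{w} k) v := by
        simp [SchwartzMap.fourier_lineDerivOp_eq,
          SchwartzMap.smulLeftCLM_apply_apply (g := (⟪·, w⟫)) (by fun_prop)]
    _ = fderiv ℝ k 0 w := by
        rw [integral_fourier_schwartz, SchwartzMap.lineDerivOp_apply_eq_fderiv]

theorem integrable_inner_smul_schwartz (k : 𝓢(V, F)) (w : V) :
    Integrable fun v ↦ ⟪v, w⟫ • k v := by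
  refine ((k.integrable_pow_mul volume 1).const_mul ‖w‖).mono'
    (Continuous.aestronglyMeasurable (by fun_prop)) (.of_forall fun v ↦ ?_)
  rw [norm_smul, pow_one, ← mul_assoc, mul_comm ‖w‖]
  gcongr
  exact norm_inner_le_norm v w

theorem integral_clm_smul_fourier_schwartz [CompleteSpace F] {ι : Type*} [Fintype ι]
    (b : OrthonormalBasis ι ℝ V) (φ : V →L[ℝ] ℂ) (k : 𝓢(V, F)) :
    ∫ v, φ v • 𝓕 k v = (2 * π * I)⁻¹ • ∑ i, φ (b i) • fderiv ℝ k 0 (b i) := by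
  have hexpand (v : V) : φ v • 𝓕 k v = ∑ i, φ (b i) • ⟪v, b i⟫ • 𝓕 k v := by
    nth_rw 1 [← b.sum_repr' v]
    simp only [map_sum, map_smul, real_inner_comm, Finset.sum_smul, smul_assoc,
      smul_comm (φ (b _)) (⟪v, b _⟫)]
  simp_rw [hexpand]
  have hintegrable (i : ι) : Integrable fun v ↦ φ (b i) • ⟪v, b i⟫ • 𝓕 k v :=
    (integrable_inner_smul_schwartz (𝓕 k) (b i)).smul (φ (b i))
  rw [integral_finsetSum _ fun i _ ↦ hintegrable i, Finset.smul_sum]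
  refine Finset.sum_congr rfl fun i _ ↦ ?_
  rw [integral_smul, integral_inner_smul_fourier_schwartz, smul_comm]

theorem hasDerivAt_integral_comp_add_smul_fourier [CompleteSpace F] {E ι : Type*}
    [NormedAddCommGroup E] [NormedSpace ℝ E] [Fintype ι] (b : OrthonormalBasis ι ℝ V)
    {f : E → ℂ} {f' : E →L[ℝ] ℂ} {x : E} {C : ℝ≥0} (hLip : LipschitzWith C f)
    (hf : HasFDerivAt f f' x) (A : V →L[ℝ] E) (k : 𝓢(V, F)) :
    HasDerivAt (fun t : ℝ ↦ ∫ v, f (x + t • A v) • 𝓕 k v)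
      ((2 * π * I)⁻¹ • ∑ i, f' (A (b i)) • fderiv ℝ k 0 (b i)) 0 := by
  have hmoment : Integrable fun v ↦ ‖A v‖ * ‖𝓕 k v‖ := by
    refine (((𝓕 k).integrable_pow_mul volume 1).const_mul ‖A‖).mono'
      (Continuous.aestronglyMeasurable (by fun_prop)) (.of_forall fun v ↦ ?_)
    rw [norm_mul, norm_norm, norm_norm, pow_one, ← mul_assoc]
    gcongr
    exact A.le_opNorm v
  convert hasDerivAt_integral_comp_add_smul hLip hf A.continuous.aestronglyMeasurable
    (𝓕 k).integrable hmoment using 1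
  exact (integral_clm_smul_fourier_schwartz b (f' ∘L A) k).symm

end FourierMoments

theorem integral_comp_add_smul {E F : Type*} [NormedAddCommGroup E] [NormedSpace ℝ E]
    [FiniteDimensional ℝ E] [MeasurableSpace E] [BorelSpace E] (μ : Measure E)
    [μ.IsAddHaarMeasure] [NormedAddCommGroup F] [NormedSpace ℝ F] (f : E → F) (x : E) (r : ℝ) :
    ∫ u, f (x + r • u) ∂μ = |(r ^ Module.finrank ℝ E)⁻¹| • ∫ u, f u ∂μ := by
  rw [Measure.integral_comp_smul μ (fun u ↦ f (x + u)) r, integral_add_left_eq_self f x]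

/-- The linear map `A_ε` such that the phase of `epsKernel ℏ ε m` at `(m + A_ε ξ, m + v)` is
`-⟪v, ξ⟫ / ℏ`. Its source is the plane with its Euclidean norm, where Mathlib's Fourier transform
lives, rather than `ℝ × ℝ` with its sup norm. -/
noncomputable def epsPhaseEquiv (ε : ℝ) : WithLp 2 (ℝ × ℝ) ≃L[ℝ] ℝ × ℝ :=
  LinearEquiv.toContinuousLinearEquiv
    { toFun ξ := (ξ.snd + ε * ξ.fst, -ξ.fst)
      invFun a := WithLp.toLp 2 (-a.2, a.1 + ε * a.2)
      map_add' ξ η := by ext <;> simp <;> ring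
      map_smul' c ξ := by ext <;> simp; ring
      left_inv ξ := WithLp.ofLp_injective 2 (Prod.ext (by simp) (by simp))
      right_inv a := by ext <;> simp }

theorem epsPhaseEquiv_apply (ε : ℝ) (ξ : WithLp 2 (ℝ × ℝ)) :
    epsPhaseEquiv ε ξ = (ξ.snd + ε * ξ.fst, -ξ.fst) := rfl

theorem measurePreserving_epsPhaseEquiv (ε : ℝ) : MeasurePreserving (epsPhaseEquiv ε) := by
  have hshear : MeasurePreserving fun ξ : ℝ × ℝ ↦ (ξ.1, ε * ξ.1 + ξ.2) :=
    (MeasurePreserving.id volume).skew_product (g := fun a b ↦ ε * a + b) (by fun_prop)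
      (.of_forall fun a ↦ (measurePreserving_add_left volume (ε * a)).map_eq)
  have hneg : MeasurePreserving (Prod.map id Neg.neg : ℝ × ℝ → ℝ × ℝ) :=
    (MeasurePreserving.id volume).prod (Measure.measurePreserving_neg volume)
  convert hneg.comp (Measure.measurePreserving_swap.comp
    (hshear.comp (WithLp.volume_preserving_ofLp ℝ ℝ))) using 1
  ext ξ <;> simp [epsPhaseEquiv_apply, add_comm]

theorem norm_epsKernel (ℏ ε : ℝ) (m a b : ℝ × ℝ) : ‖epsKernel ℏ ε m a b‖ = 1 := by
  rw [epsKernel, div_mul_eq_mul_div, mul_div_assoc, ← ofReal_div, norm_exp_I_mul_ofReal]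

theorem continuous_epsKernel (ℏ ε : ℝ) (m : ℝ × ℝ) :
    Continuous fun ab : (ℝ × ℝ) × (ℝ × ℝ) ↦ epsKernel ℏ ε m ab.1 ab.2 := by
  unfold epsKernel
  fun_prop

theorem epsKernel_add_add (ℏ ε : ℝ) (m u v : ℝ × ℝ) :
    epsKernel ℏ ε m (m + u) (m + v) =
      exp (I / ℏ * ((u.2 * v.1 - u.1 * v.2 - ε * (u.2 * v.2) : ℝ) : ℂ)) := by
  rw [epsKernel, Prod.fst_add, Prod.snd_add, Prod.fst_add, Prod.snd_add]
  congr 3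
  ring

theorem epsKernel_add_smul_epsPhaseEquiv {ℏ : ℝ} (hℏ : ℏ ≠ 0) (ε : ℝ) (m : ℝ × ℝ)
    (ξ v : WithLp 2 (ℝ × ℝ)) :
    epsKernel ℏ ε m (m + (2 * π * ℏ) • epsPhaseEquiv ε ξ) (m + v.ofLp) = 𝐞 (-⟪v, ξ⟫) := by
  have hℏ' : (ℏ : ℂ) ≠ 0 := ofReal_ne_zero.mpr hℏ
  have hinner : ⟪v, ξ⟫ = v.fst * ξ.fst + v.snd * ξ.snd := by
    simp [WithLp.prod_inner_apply, mul_comm]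
  rw [epsKernel_add_add, Real.fourierChar_apply, epsPhaseEquiv_apply, hinner]
  simp only [Prod.smul_mk, smul_eq_mul, WithLp.ofLp_fst, WithLp.ofLp_snd]
  congr 1
  push_cast
  field_simp
  ring

theorem moyalEps_eq_integral_integral {f g : ℝ × ℝ → ℂ} (hf : Integrable f) (hg : Integrable g)
    (ℏ ε : ℝ) (m : ℝ × ℝ) :
    moyalEps ℏ ε f g m = ((2 * π * ℏ) ^ 2)⁻¹ • ∫ a, f a * ∫ b, g b * epsKernel ℏ ε m a b := by
  have hint : Integrable fun ab : (ℝ × ℝ) × (ℝ × ℝ) ↦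
      f ab.1 * g ab.2 * epsKernel ℏ ε m ab.1 ab.2 :=
    (hf.mul_prod hg).mul_bdd (c := 1) (continuous_epsKernel ℏ ε m).aestronglyMeasurable
      (.of_forall fun _ ↦ (norm_epsKernel ..).le)
  rw [moyalEps, Measure.volume_eq_prod, integral_prod _ hint]
  simp_rw [mul_assoc, integral_const_mul]

theorem integral_mul_epsKernel (g : ℝ × ℝ → ℂ) {ℏ : ℝ} (hℏ : ℏ ≠ 0) (ε : ℝ) (m : ℝ × ℝ)
    (ξ : WithLp 2 (ℝ × ℝ)) :
    ∫ b, g b * epsKernel ℏ ε m (m + (2 * π * ℏ) • epsPhaseEquiv ε ξ) b =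
      𝓕 (fun v : WithLp 2 (ℝ × ℝ) ↦ g (m + v.ofLp)) ξ := by
  rw [← integral_add_left_eq_self _ m, Real.fourier_eq,
    ← (WithLp.volume_preserving_ofLp ℝ ℝ).integral_comp
      (WithLp.prodContinuousLinearEquiv 2 ℝ ℝ ℝ).toHomeomorph.measurableEmbedding]
  simp_rw [epsKernel_add_smul_epsPhaseEquiv hℏ, Circle.smul_def, smul_eq_mul, mul_comm (g _)]

theorem moyalEps_eq_integral_fourier {f g : ℝ × ℝ → ℂ} (hf : Integrable f) (hg : Integrable g)
    {ℏ : ℝ} (hℏ : ℏ ≠ 0) (ε : ℝ) (m : ℝ × ℝ) :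
    moyalEps ℏ ε f g m =
      ∫ ξ, f (m + (2 * π * ℏ) • epsPhaseEquiv ε ξ) *
        𝓕 (fun v : WithLp 2 (ℝ × ℝ) ↦ g (m + v.ofLp)) ξ := by
  have hdilate := integral_comp_add_smul volume
    (fun a ↦ f a * ∫ b, g b * epsKernel ℏ ε m a b) m (2 * π * ℏ)
  rw [show Module.finrank ℝ (ℝ × ℝ) = 2 by simp, abs_of_nonneg (by positivity)] at hdilate
  rw [moyalEps_eq_integral_integral hf hg, ← hdilate,
    ← (measurePreserving_epsPhaseEquiv ε).integral_comp
      (epsPhaseEquiv ε).toHomeomorph.measurableEmbedding]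
  simp_rw [integral_mul_epsKernel g hℏ]

/-- The Schwartz function `v ↦ g (m + v)` on the Euclidean plane. -/
noncomputable def euclideanRecenter (g : 𝓢(ℝ × ℝ, ℂ)) (m : ℝ × ℝ) : 𝓢(WithLp 2 (ℝ × ℝ), ℂ) :=
  SchwartzMap.compCLMOfContinuousLinearEquiv ℂ (WithLp.prodContinuousLinearEquiv 2 ℝ ℝ ℝ)
    (g.compSubConstCLM ℂ (-m))

theorem coe_euclideanRecenter (g : 𝓢(ℝ × ℝ, ℂ)) (m : ℝ × ℝ) :
    ⇑(euclideanRecenter g m) = fun v ↦ g (m + v.ofLp) := by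
  ext v
  simp [euclideanRecenter, add_comm]

theorem fderiv_euclideanRecenter_zero (g : 𝓢(ℝ × ℝ, ℂ)) (m : ℝ × ℝ) (w : WithLp 2 (ℝ × ℝ)) :
    fderiv ℝ (euclideanRecenter g m) 0 w = fderiv ℝ g m w.ofLp := by
  let e := WithLp.prodContinuousLinearEquiv 2 ℝ ℝ ℝ
  have he : HasFDerivAt (fun v ↦ m + e v) (e : WithLp 2 (ℝ × ℝ) →L[ℝ] ℝ × ℝ) 0 :=
    e.hasFDerivAt.const_add m
  have hg : HasFDerivAt g (fderiv ℝ g m) (m + e 0) := by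
    simpa using g.differentiableAt.hasFDerivAt
  have hcomp := hg.comp (0 : WithLp 2 (ℝ × ℝ)) he
  rw [coe_euclideanRecenter]
  exact congrArg (· w) hcomp.fderiv

theorem fderiv_apply_eq_pderivX_add_pderivY (f : ℝ × ℝ → ℂ) (m v : ℝ × ℝ) :
    fderiv ℝ f m v = v.1 * pderivX f m + v.2 * pderivY f m := by
  have hv : v = v.1 • (1, 0) + v.2 • (0, 1) := by ext <;> simp
  conv_lhs => rw [hv]
  rw [map_add, map_smul, map_smul, real_smul, real_smul, pderivX, pderivY]

theorem hasDerivAt_integral_epsPhaseEquiv_mul_fourier (ε : ℝ) {f : ℝ × ℝ → ℂ} {C : ℝ≥0}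
    {m : ℝ × ℝ} (hLip : LipschitzWith C f) (hf : DifferentiableAt ℝ f m) (g : 𝓢(ℝ × ℝ, ℂ)) :
    HasDerivAt (fun ℏ : ℝ ↦ ∫ ξ, f (m + (2 * π * ℏ) • epsPhaseEquiv ε ξ) *
        𝓕 (euclideanRecenter g m) ξ)
      (-I * (pbracket f g m + ε * (pderivX f m * pderivX g m))) 0 := by
  let A : WithLp 2 (ℝ × ℝ) →L[ℝ] ℝ × ℝ := (2 * π) • epsPhaseEquiv ε
  let b := (OrthonormalBasis.singleton (Fin 1) ℝ).prod (OrthonormalBasis.singleton (Fin 1) ℝ)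
  have hA (ξ : WithLp 2 (ℝ × ℝ)) (ℏ : ℝ) : (2 * π * ℏ) • epsPhaseEquiv ε ξ = ℏ • A ξ := by
    rw [mul_comm, mul_smul]
    rfl
  have hA_fst : A (WithLp.toLp 2 (1, 0)) = (2 * π * ε, -(2 * π)) := by
    simp [A, epsPhaseEquiv_apply]
  have hA_snd : A (WithLp.toLp 2 (0, 1)) = (2 * π, 0) := by
    simp [A, epsPhaseEquiv_apply]
  have hsum : ∑ i, fderiv ℝ f m (A (b i)) • fderiv ℝ (euclideanRecenter g m) 0 (b i) =
      2 * π * (pbracket f g m + ε * (pderivX f m * pderivX g m)) := by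
    calc _ = fderiv ℝ f m (A (WithLp.toLp 2 (1, 0))) * pderivX g m +
          fderiv ℝ f m (A (WithLp.toLp 2 (0, 1))) * pderivY g m := by
          simp [b, fderiv_euclideanRecenter_zero, pderivX, pderivY]
      _ = _ := by
          rw [hA_fst, hA_snd, fderiv_apply_eq_pderivX_add_pderivY,
            fderiv_apply_eq_pderivX_add_pderivY, pbracket]
          push_cast
          ring
  have hconst : -I = (2 * π * I)⁻¹ * (2 * π) := by
    rw [mul_inv_rev, inv_I, inv_mul_cancel_right₀ (by simp)]
  simp_rw [hA, hconst, mul_assoc (2 * π * I : ℂ)⁻¹, ← hsum]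
  exact hasDerivAt_integral_comp_add_smul_fourier b hLip hf.hasFDerivAt A (euclideanRecenter g m)

theorem tendsto_moyalEps_sub_mul_div (ε : ℝ) {f : ℝ × ℝ → ℂ} {C : ℝ≥0} {m : ℝ × ℝ}
    (hint : Integrable f) (hLip : LipschitzWith C f) (hf : DifferentiableAt ℝ f m)
    (g : 𝓢(ℝ × ℝ, ℂ)) :
    Tendsto (fun ℏ : ℝ ↦ (moyalEps ℏ ε f g m - f m * g m) / (ℏ : ℂ)) (𝓝[≠] 0)
      (𝓝 (-I * (pbracket f g m + ε * (pderivX f m * pderivX g m)))) := by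
  refine (hasDerivAt_iff_tendsto_slope_zero.mp
    (hasDerivAt_integral_epsPhaseEquiv_mul_fourier ε hLip hf g)).congr' ?_
  filter_upwards [self_mem_nhdsWithin] with ℏ hℏ
  have hzero : ∫ ξ, f m * 𝓕 (euclideanRecenter g m) ξ = f m * g m := by
    rw [integral_const_mul, integral_fourier_schwartz, coe_euclideanRecenter]
    simp
  rw [moyalEps_eq_integral_fourier hint g.integrable hℏ, ← coe_euclideanRecenter,
    ← SchwartzMap.fourier_coe]
  simp [hzero, div_eq_inv_mul]

theorem moyalEps_commutator_general (ε : ℝ) (f g : 𝓢(ℝ × ℝ, ℂ)) (m : ℝ × ℝ) :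
    Tendsto (fun ℏ : ℝ ↦ (moyalEps ℏ ε f g m - moyalEps ℏ ε g f m) / (ℏ : ℂ)) (𝓝[≠] 0)
      (𝓝 (-2 * I * pbracket f g m)) := by
  obtain ⟨Cf, hLipf⟩ := exists_lipschitzWith_schwartz f
  obtain ⟨Cg, hLipg⟩ := exists_lipschitzWith_schwartz g
  convert (tendsto_moyalEps_sub_mul_div ε f.integrable hLipf f.differentiableAt g).sub
    (tendsto_moyalEps_sub_mul_div ε g.integrable hLipg g.differentiableAt f) using 1
  · ext ℏ
    ring
  · simp only [pbracket]
    congr 1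
    ring

/-- Commutator semiclassical asymptotics of the ε-deformed product, independent of ε:
`lim_{ℏ → 0⁺} [(f ⋆_{ℏ,ε} g)(x,y) − (g ⋆_{ℏ,ε} f)(x,y)]/ℏ = −2i·{f,g}(x,y)`. -/
theorem moyalEps_commutator (ε : ℝ) (f g : SchwartzMap (ℝ × ℝ) ℂ) (m : ℝ × ℝ) :
    Tendsto (fun ℏ : ℝ => (moyalEps ℏ ε (⇑f) (⇑g) m - moyalEps ℏ ε (⇑g) (⇑f) m) / (ℏ : ℂ))
      (nhdsWithin 0 (Set.Ioi 0))
      (nhds (-2 * Complex.I * pbracket (⇑f) (⇑g) m)) :=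
  (moyalEps_commutator_general ε f g m).mono_left (nhdsWithin_mono 0 fun _ hℏ ↦ ne_of_gt hℏ)
end

section
/- For the quantized torus product, with f(θ₁,φ₁) = exp(iθ₁) and g(θ₂,φ₂) = exp(iφ₂), the limit defining (f ⋆_ℏ g)(θ,φ) exists for every (θ,φ) ∈ ℝ² and every ℏ > 0, and equals exp(iℏ)·exp(iθ)·exp(iφ). -/
open MeasureTheory Complex Filter

/-- The torus kernel at base point `m = (θ,φ)`, on `a = (θ₁,φ₁)`, `b = (θ₂,φ₂)`:
`exp((i/ℏ)·[(θ−θ₂)(φ−φ₁) − (φ−φ₂)(θ−θ₁)])`. -/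
noncomputable def torusKernel (ℏ : ℝ) (m a b : ℝ × ℝ) : ℂ :=
  Complex.exp (Complex.I / ℏ *
    (((m.1 - b.1) * (m.2 - a.2) - (m.2 - b.2) * (m.1 - a.1) : ℝ) : ℂ))

/-- The truncated torus product `T_n(f,g)(θ,φ)`, integrating over the box `[−2πn, 2πn]⁴`. -/
noncomputable def torusT (ℏ : ℝ) (f g : ℝ × ℝ → ℂ) (n : ℕ) (m : ℝ × ℝ) : ℂ :=
  ((2 * Real.pi * ℏ) ^ 2 : ℝ)⁻¹ •
    ∫ ab in Set.Icc (-(2 * Real.pi * n), -(2 * Real.pi * n)) (2 * Real.pi * n, 2 * Real.pi * n)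
        ×ˢ Set.Icc (-(2 * Real.pi * n), -(2 * Real.pi * n)) (2 * Real.pi * n, 2 * Real.pi * n),
      f ab.1 * g ab.2 * torusKernel ℏ m ab.1 ab.2

/-!
The kernel couples only `φ₁` with `θ₂` and `θ₁` with `φ₂`. For plane waves, completing the product
in each pair therefore turns the fourfold integral into a phase times two integrals of
`exp (±(i/ℏ)(s - u)(t - v))` over a square, and it remains to see that each of these tends to `2πℏ`.

Over a box such an integral is, up to a factor, the alternating sum over the corners of the entire
function `Ein` at imaginary arguments. Along the ray of angle `τ`, `|τ| ≤ π/2`, one has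
`Ein (r exp (iτ)) = log r + γ + iτ + o(1)`: on the positive axis because `(Ein r - log r)'` is
integrable, on the other rays by rotating along an arc, on which `exp (-w)` averages to zero. In the
alternating sum the logarithms and `γ` cancel, and the four angles `±π/2` add up to `2π`.
-/

/-- The complementary exponential integral `Ein z = ∫₀^z (1 - exp (-w)) / w dw`, taken along the
segment from `0` to `z`. Writing the integrand as a `dslope` removes its singularity at `0`. -/
noncomputable def ein (z : ℂ) : ℂ :=
  ∫ t in (0 : ℝ)..1, z * dslope exp 0 (-(t * z))

lemma differentiable_dslope_exp : Differentiable ℂ (dslope exp 0) := by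
  rw [← differentiableOn_univ, differentiableOn_dslope univ_mem, differentiableOn_univ]
  exact differentiable_exp

@[fun_prop]
lemma continuous_dslope_exp : Continuous (dslope exp 0) :=
  differentiable_dslope_exp.continuous

lemma mul_dslope_exp (z : ℂ) : z * dslope exp 0 z = exp z - 1 := by
  simpa using sub_smul_dslope exp 0 z

lemma hasDerivAt_ein (z : ℂ) : HasDerivAt ein (dslope exp 0 (-z)) z := by
  have hdiff : Differentiable ℂ fun w => dslope exp 0 (-w) :=
    differentiable_dslope_exp.comp differentiable_neg
  obtain ⟨F, hF⟩ := hdiff.isExactOn_univ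
  have ein_eq (w : ℂ) : ein w = F w - F 0 := by
    have hsegment (t : ℝ) :
        HasDerivAt (fun t : ℝ => F (t * w)) (w * dslope exp 0 (-(t * w))) t := by
      simpa [mul_comm] using
        ((hF (t * w) trivial).comp (t : ℂ) ((hasDerivAt_id _).mul_const w)).comp_ofReal
    have hcont : Continuous fun t : ℝ => w * dslope exp 0 (-(t * w)) := by
      fun_prop
    simpa only [ein, ofReal_one, ofReal_zero, one_mul, zero_mul] using
      intervalIntegral.integral_eq_sub_of_hasDerivAt (fun t _ => hsegment t)
        (hcont.intervalIntegrable 0 1)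
  rw [funext ein_eq]
  exact (hF z trivial).sub_const _

lemma integral_exp_mul_eq_dslope (z : ℂ) (a b : ℝ) :
    ∫ t in a..b, exp (z * t) = b * dslope exp 0 (z * b) - a * dslope exp 0 (z * a) := by
  rcases eq_or_ne z 0 with rfl | hz
  · simp
  · rw [integral_exp_mul_complex hz, div_eq_iff hz]
    linear_combination mul_dslope_exp (z * a) - mul_dslope_exp (z * b)

lemma integral_mul_dslope_exp {z : ℂ} (hz : z ≠ 0) (a b c : ℝ) :
    ∫ s in a..b, c * dslope exp 0 (-(z * s) * c) = (ein (z * b * c) - ein (z * a * c)) / z := by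
  have hderiv (s : ℝ) : HasDerivAt (fun s : ℝ => ein (z * s * c) / z)
      (c * dslope exp 0 (-(z * s) * c)) s := by
    have hinner : HasDerivAt (fun s : ℂ => z * s * c) (z * c) s := by
      simpa using ((hasDerivAt_id (s : ℂ)).const_mul z).mul_const (c : ℂ)
    refine (((hasDerivAt_ein _).comp (s : ℂ) hinner).div_const z).comp_ofReal.congr_deriv ?_
    rw [neg_mul]
    field_simp
  have hcont : Continuous fun s : ℝ => c * dslope exp 0 (-(z * s) * c) := by
    fun_prop
  rw [intervalIntegral.integral_eq_sub_of_hasDerivAt (fun s _ => hderiv s)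
    (hcont.intervalIntegrable a b), sub_div]

lemma integral_integral_exp_neg_mul {z : ℂ} (hz : z ≠ 0) (a b c d : ℝ) :
    ∫ s in a..b, ∫ t in c..d, exp (-(z * s) * t) =
      (ein (z * b * d) - ein (z * a * d) - (ein (z * b * c) - ein (z * a * c))) / z := by
  have hint (e : ℝ) :
      IntervalIntegrable (fun s : ℝ => e * dslope exp 0 (-(z * s) * e)) volume a b :=
    Continuous.intervalIntegrable (by fun_prop) a b
  simp_rw [integral_exp_mul_eq_dslope]
  rw [intervalIntegral.integral_sub (hint d) (hint c), integral_mul_dslope_exp hz,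
    integral_mul_dslope_exp hz, ← sub_div]

lemma ein_mul_exp_mul_I_sub_ein (r τ : ℝ) :
    ein (r * exp (τ * I)) - ein r = τ * I - I * ∫ α in (0 : ℝ)..τ, exp (-(r * exp (α * I))) := by
  have hderiv (α : ℝ) : HasDerivAt (fun α : ℝ => ein (r * exp (α * I)))
      (I * (1 - exp (-(r * exp (α * I))))) α := by
    have harc : HasDerivAt (fun w : ℂ => r * exp (w * I)) (r * (exp (α * I) * I)) α := by
      simpa using ((hasDerivAt_id (α : ℂ)).mul_const I).cexp.const_mul (r : ℂ)
    refine ((hasDerivAt_ein _).comp (α : ℂ) harc).comp_ofReal.congr_deriv ?_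
    linear_combination -I * mul_dslope_exp (-(r * exp (α * I)))
  have hcont : Continuous fun α : ℝ => exp (-(r * exp (α * I))) := by fun_prop
  have hFTC := intervalIntegral.integral_eq_sub_of_hasDerivAt (fun α _ => hderiv α)
    (((continuous_const.sub hcont).const_mul I).intervalIntegrable 0 τ)
  rw [intervalIntegral.integral_const_mul, intervalIntegral.integral_sub
    intervalIntegrable_const (hcont.intervalIntegrable 0 τ)] at hFTC
  simp only [intervalIntegral.integral_const, real_smul, sub_zero, mul_one, ofReal_zero, zero_mul,
    exp_zero] at hFTC
  linear_combination -hFTC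

lemma norm_exp_neg_mul_exp_mul_I (r α : ℝ) :
    ‖exp (-(r * exp (α * I)))‖ = Real.exp (-(r * Real.cos α)) := by
  simp [norm_exp, exp_ofReal_mul_I_re]

lemma tendsto_integral_exp_neg_arc {τ : ℝ} (hτ : |τ| ≤ Real.pi / 2) :
    Tendsto (fun r : ℝ => ∫ α in (0 : ℝ)..τ, exp (-(r * exp (α * I)))) atTop (nhds 0) := by
  have habs {α : ℝ} (hα : α ∈ Set.uIoc 0 τ) : |α| ≤ Real.pi / 2 := by
    simpa using (Set.abs_sub_left_of_mem_uIcc (Set.uIoc_subset_uIcc hα)).trans (by simpa using hτ)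
  rw [← intervalIntegral.integral_zero (E := ℂ) (μ := volume) (a := 0) (b := τ)]
  refine intervalIntegral.tendsto_integral_filter_of_dominated_convergence (fun _ => 1)
    (.of_forall fun r => Continuous.aestronglyMeasurable (by fun_prop)) ?_
    intervalIntegrable_const ?_
  · filter_upwards [eventually_ge_atTop 0] with r hr
    refine .of_forall fun α hα => ?_
    rw [norm_exp_neg_mul_exp_mul_I, Real.exp_le_one_iff, neg_nonpos]
    exact mul_nonneg hr (Real.cos_nonneg_of_mem_Icc (abs_le.1 (habs hα)))
  · filter_upwards [Measure.ae_ne volume (Real.pi / 2), Measure.ae_ne volume (-(Real.pi / 2))]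
      with α hne hne' hα
    obtain ⟨hge, hle⟩ := abs_le.1 (habs hα)
    have hcos : 0 < Real.cos α :=
      Real.cos_pos_of_mem_Ioo ⟨hge.lt_of_ne hne'.symm, hle.lt_of_ne hne⟩
    rw [tendsto_zero_iff_norm_tendsto_zero]
    simp_rw [norm_exp_neg_mul_exp_mul_I]
    exact Real.tendsto_exp_neg_atTop_nhds_zero.comp (tendsto_id.atTop_mul_const hcos)

lemma exists_tendsto_ein_sub_log :
    ∃ γ : ℂ, Tendsto (fun r : ℝ => ein r - Real.log r) atTop (nhds γ) := by
  have hderiv : ∀ r ∈ Set.Ioi (1 : ℝ), HasDerivAt (fun r : ℝ => ein r - Real.log r)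
      (-(Real.exp (-r) / r : ℝ)) r := fun r hr => by
    have hr0 : r ≠ 0 := (zero_lt_one.trans hr).ne'
    refine ((hasDerivAt_ein r).comp_ofReal.sub
      (Real.hasDerivAt_log hr0).ofReal_comp).congr_deriv ?_
    have : (r : ℂ) ≠ 0 := ofReal_ne_zero.2 hr0
    push_cast
    field_simp
    linear_combination -mul_dslope_exp (-r)
  have hint : IntegrableOn (fun r : ℝ => (-(Real.exp (-r) / r : ℝ) : ℂ)) (Set.Ioi 1) := by
    refine Integrable.mono' (integrableOn_exp_neg_Ioi 1)
      (Measurable.aestronglyMeasurable (by fun_prop)) ?_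
    filter_upwards [ae_restrict_mem measurableSet_Ioi] with r (hr : 1 < r)
    rw [norm_neg, norm_real, Real.norm_of_nonneg (by positivity)]
    exact div_le_self (Real.exp_pos _).le hr.le
  exact ⟨_, tendsto_limUnder_of_hasDerivAt_of_integrableOn_Ioi hderiv hint⟩

lemma exists_tendsto_ein_mul_exp_mul_I_sub_log :
    ∃ γ : ℂ, ∀ τ : ℝ, |τ| ≤ Real.pi / 2 →
      Tendsto (fun r : ℝ => ein (r * exp (τ * I)) - Real.log r) atTop (nhds (γ + τ * I)) := by
  obtain ⟨γ, hγ⟩ := exists_tendsto_ein_sub_log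
  refine ⟨γ, fun τ hτ => ?_⟩
  have harc := ((tendsto_integral_exp_neg_arc hτ).const_mul I).const_sub (τ * I)
  rw [mul_zero, sub_zero] at harc
  refine (hγ.add harc).congr fun r => ?_
  rw [← ein_mul_exp_mul_I_sub_ein]
  ring

lemma exists_tendsto_ein_I_mul_sub_log :
    ∃ γ : ℂ, Tendsto (fun x : ℝ => ein (I * x) - Real.log x) atTop (nhds (γ + Real.pi / 2 * I)) ∧
      Tendsto (fun x : ℝ => ein (I * x) - Real.log x) atBot (nhds (γ - Real.pi / 2 * I)) := by
  obtain ⟨γ, hγ⟩ := exists_tendsto_ein_mul_exp_mul_I_sub_log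
  have hpi : |Real.pi / 2| = Real.pi / 2 := abs_of_pos Real.pi_div_two_pos
  refine ⟨γ, ?_, ?_⟩
  · simpa [exp_pi_div_two_mul_I, mul_comm I] using hγ (Real.pi / 2) hpi.le
  · have := (hγ (-(Real.pi / 2)) (by rw [abs_neg, hpi])).comp tendsto_neg_atBot_atTop
    simpa [Function.comp_def, exp_neg, exp_pi_div_two_mul_I, mul_comm I, sub_eq_add_neg] using this

lemma tendsto_integral_integral_exp_neg_I_mul {ι : Type*} {l : Filter ι} {a b c d : ι → ℝ}
    (ha : Tendsto a l atBot) (hb : Tendsto b l atTop)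
    (hc : Tendsto c l atBot) (hd : Tendsto d l atTop) :
    Tendsto (fun i => ∫ s in a i..b i, ∫ t in c i..d i, exp (-(I * s) * t)) l
      (nhds (2 * Real.pi)) := by
  obtain ⟨γ, hTop, hBot⟩ := exists_tendsto_ein_I_mul_sub_log
  have hcorners := (((hTop.comp (hb.atTop_mul_atTop₀ hd)).sub
    (hBot.comp (ha.atBot_mul_atTop₀ hd))).sub ((hBot.comp (hb.atTop_mul_atBot₀ hc)).sub
      (hTop.comp (ha.atBot_mul_atBot₀ hc)))).div_const I
  have hlimit : (γ + Real.pi / 2 * I - (γ - Real.pi / 2 * I) -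
      (γ - Real.pi / 2 * I - (γ + Real.pi / 2 * I))) / I = 2 * Real.pi := by
    field_simp
    ring
  rw [hlimit] at hcorners
  refine hcorners.congr' ?_
  filter_upwards [ha.eventually_ne_atBot 0, hb.eventually_ne_atTop 0, hc.eventually_ne_atBot 0,
    hd.eventually_ne_atTop 0] with i ha₀ hb₀ hc₀ hd₀
  rw [integral_integral_exp_neg_mul I_ne_zero]
  simp only [Function.comp, Real.log_mul, ha₀, hb₀, hc₀, hd₀, ne_eq, not_false_eq_true]
  push_cast
  ring_nf

lemma tendsto_integral_integral_exp_neg_I_mul_sub_mul_sub {k : ℝ} (hk : 0 < k) (u v : ℝ) :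
    Tendsto (fun N : ℝ => ∫ s in -N..N, ∫ t in -N..N, exp (-(I * (k * (s - u))) * (t - v))) atTop
      (nhds (2 * Real.pi / k)) := by
  have hlo (w : ℝ) : Tendsto (fun N => -N - w) atTop atBot :=
    tendsto_atBot_add_const_right _ _ tendsto_neg_atTop_atBot
  have hhi (w : ℝ) : Tendsto (fun N => N - w) atTop atTop :=
    tendsto_atTop_add_const_right _ _ tendsto_id
  have hbox := (tendsto_integral_integral_exp_neg_I_mul ((hlo u).const_mul_atBot hk)
    ((hhi u).const_mul_atTop hk) (hlo v) (hhi v)).div_const (k : ℂ)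
  refine hbox.congr fun N => ?_
  have hinner (s : ℝ) : ∫ t in -N..N, exp (-(I * (k * (s - u))) * (t - v)) =
      ∫ t in (-N - v)..(N - v), exp (-(I * (k * (s - u))) * t) := by
    simpa using intervalIntegral.integral_comp_sub_right (a := -N) (b := N)
      (fun t : ℝ => exp (-(I * (k * (s - u))) * t)) v
  have houter := intervalIntegral.integral_comp_mul_sub (a := -N) (b := N)
    (fun s : ℝ => ∫ t in (-N - v)..(N - v), exp (-(I * s) * t)) hk.ne' (k * u)
  simp_rw [hinner]
  simpa [div_eq_inv_mul, mul_sub] using houter.symm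

/-- The oscillatory integral of `exp (ik(s - u)(t - v))` over the square `[-N, N]²`. -/
noncomputable def saddleIntegral (k u v N : ℝ) : ℂ :=
  ∫ s in -N..N, ∫ t in -N..N, exp (I * (k * (s - u) * (t - v)))

lemma tendsto_saddleIntegral {k : ℝ} (hk : k ≠ 0) (u v : ℝ) :
    Tendsto (saddleIntegral k u v) atTop (nhds (2 * Real.pi / |k|)) := by
  rcases hk.lt_or_gt with hneg | hpos
  · rw [abs_of_neg hneg]
    refine (tendsto_integral_integral_exp_neg_I_mul_sub_mul_sub (neg_pos.2 hneg) u v).congr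
      fun N => ?_
    simp only [saddleIntegral]
    congr! 5 with s t
    push_cast
    ring
  · rw [abs_of_pos hpos]
    refine (tendsto_integral_integral_exp_neg_I_mul_sub_mul_sub hpos (-u) v).congr fun N => ?_
    have hreflect := intervalIntegral.integral_comp_neg (a := -N) (b := N)
      (fun s : ℝ => ∫ t in -N..N, exp (I * (k * (s - u) * (t - v))))
    rw [neg_neg] at hreflect
    rw [saddleIntegral, ← hreflect]
    congr! 5 with s t
    push_cast
    ring

lemma integral_prod_prod_mul_cross {α β γ δ 𝕜 : Type*} [MeasurableSpace α]
    [MeasurableSpace β] [MeasurableSpace γ] [MeasurableSpace δ] [RCLike 𝕜]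
    {μ : Measure α} {ν : Measure β} {ρ : Measure γ} {τ : Measure δ}
    [SFinite μ] [SFinite ν] [SFinite ρ] [SFinite τ] (f : β → γ → 𝕜) (g : α → δ → 𝕜)
    (hint : Integrable (fun x : (α × β) × γ × δ => f x.1.2 x.2.1 * g x.1.1 x.2.2)
      ((μ.prod ν).prod (ρ.prod τ))) :
    ∫ x, f x.1.2 x.2.1 * g x.1.1 x.2.2 ∂((μ.prod ν).prod (ρ.prod τ)) =
      (∫ b, ∫ c, f b c ∂ρ ∂ν) * ∫ a, ∫ d, g a d ∂τ ∂μ := by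
  rw [integral_prod _ hint]
  simp only [integral_prod_mul (f _) (g _), mul_comm (∫ c, f _ c ∂ρ)]
  rw [integral_prod_mul (fun a => ∫ d, g a d ∂τ) fun b => ∫ c, f b c ∂ρ, mul_comm]

lemma setIntegral_Icc_prod_Icc_mul_cross {𝕜 : Type*} [RCLike 𝕜] {f g : ℝ → ℝ → 𝕜}
    (hf : Continuous f.uncurry) (hg : Continuous g.uncurry) {a b : ℝ} (hab : a ≤ b) :
    ∫ x in Set.Icc ((a, a) : ℝ × ℝ) (b, b) ×ˢ Set.Icc ((a, a) : ℝ × ℝ) (b, b),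
        f x.1.2 x.2.1 * g x.1.1 x.2.2 =
      (∫ s in a..b, ∫ t in a..b, f s t) * ∫ s in a..b, ∫ t in a..b, g s t := by
  have hcont : Continuous fun x : (ℝ × ℝ) × ℝ × ℝ => f x.1.2 x.2.1 * g x.1.1 x.2.2 :=
    (hf.comp (by fun_prop : Continuous fun x : (ℝ × ℝ) × ℝ × ℝ => (x.1.2, x.2.1))).mul
      (hg.comp (by fun_prop : Continuous fun x : (ℝ × ℝ) × ℝ × ℝ => (x.1.1, x.2.2)))
  have hint := hcont.continuousOn.integrableOn_compact (μ := volume)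
    ((isCompact_Icc (a := ((a, a) : ℝ × ℝ)) (b := (b, b))).prod
      (isCompact_Icc (a := ((a, a) : ℝ × ℝ)) (b := (b, b))))
  simp only [IntegrableOn, ← Set.Icc_prod_Icc, Measure.volume_eq_prod, ← Measure.prod_restrict]
    at hint ⊢
  rw [integral_prod_prod_mul_cross f g hint]
  simp only [intervalIntegral.integral_of_le hab, integral_Icc_eq_integral_Ioc]

/-- The plane wave `x ↦ exp (i⟨p, x⟩)` of frequency `p`, a character of the torus when `p` is
integral. -/
noncomputable def planeWave (p : ℝ × ℝ) : ℝ × ℝ → ℂ :=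
  fun x => exp (I * (p.1 * x.1 + p.2 * x.2))

lemma planeWave_mul_planeWave_mul_torusKernel {ℏ : ℝ} (hℏ : ℏ ≠ 0) (p q m a b : ℝ × ℝ) :
    planeWave p a * planeWave q b * torusKernel ℏ m a b =
      exp (I * (ℏ * (p.1 * q.2 - p.2 * q.1))) * planeWave (p + q) m *
        (exp (I * ((ℏ⁻¹ : ℝ) * (a.2 - (m.2 - ℏ * q.1 : ℝ)) * (b.1 - (m.1 - ℏ * p.2 : ℝ)))) *
          exp (I * ((-ℏ⁻¹ : ℝ) * (a.1 - (m.1 + ℏ * q.2 : ℝ)) * (b.2 - (m.2 + ℏ * p.1 : ℝ))))) := by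
  have : (ℏ : ℂ) ≠ 0 := ofReal_ne_zero.2 hℏ
  simp only [planeWave, torusKernel, ← exp_add, Prod.fst_add, Prod.snd_add]
  congr 1
  push_cast
  field_simp
  ring

lemma torusT_planeWave {ℏ : ℝ} (hℏ : ℏ ≠ 0) (p q m : ℝ × ℝ) (n : ℕ) :
    torusT ℏ (planeWave p) (planeWave q) n m =
      ((2 * Real.pi * ℏ) ^ 2 : ℝ)⁻¹ •
        (exp (I * (ℏ * (p.1 * q.2 - p.2 * q.1))) * planeWave (p + q) m *
          (saddleIntegral ℏ⁻¹ (m.2 - ℏ * q.1) (m.1 - ℏ * p.2) (2 * Real.pi * n) *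
            saddleIntegral (-ℏ⁻¹) (m.1 + ℏ * q.2) (m.2 + ℏ * p.1) (2 * Real.pi * n))) := by
  have hle : -(2 * Real.pi * n) ≤ 2 * Real.pi * n := neg_le_self (by positivity)
  simp only [torusT, planeWave_mul_planeWave_mul_torusKernel hℏ, saddleIntegral]
  rw [integral_const_mul, ← setIntegral_Icc_prod_Icc_mul_cross (by fun_prop) (by fun_prop) hle]

theorem torus_product_theta_phi_general {ℏ : ℝ} (hℏ : ℏ ≠ 0) (p q m : ℝ × ℝ) :
    Tendsto (fun n : ℕ => torusT ℏ (planeWave p) (planeWave q) n m) atTop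
      (nhds (exp (I * (ℏ * (p.1 * q.2 - p.2 * q.1))) * planeWave (p + q) m)) := by
  have hN : Tendsto (fun n : ℕ => 2 * Real.pi * (n : ℝ)) atTop atTop :=
    tendsto_natCast_atTop_atTop.const_mul_atTop Real.two_pi_pos
  have hsaddle {k : ℝ} (hk : k ≠ 0) (u v : ℝ) :
      Tendsto (fun n : ℕ => saddleIntegral k u v (2 * Real.pi * n)) atTop
        (nhds (2 * Real.pi / |k|)) :=
    (tendsto_saddleIntegral hk u v).comp hN
  have hnormalized (z : ℂ) : ((2 * Real.pi * ℏ) ^ 2 : ℝ)⁻¹ •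
      (z * (2 * Real.pi / |ℏ⁻¹| * (2 * Real.pi / |-ℏ⁻¹|))) = z := by
    have hsq : (|ℏ| : ℝ) ^ 2 = (ℏ : ℂ) ^ 2 := by exact_mod_cast sq_abs ℏ
    have : (ℏ : ℂ) ≠ 0 := ofReal_ne_zero.2 hℏ
    rw [abs_neg, abs_inv, real_smul]
    push_cast
    field_simp
    rw [hsq, mul_comm]
  have hproduct (z : ℂ) := (((hsaddle (inv_ne_zero hℏ) (m.2 - ℏ * q.1) (m.1 - ℏ * p.2)).mul
    (hsaddle (neg_ne_zero.2 (inv_ne_zero hℏ)) (m.1 + ℏ * q.2) (m.2 + ℏ * p.1))).const_mul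
      z).const_smul ((2 * Real.pi * ℏ) ^ 2 : ℝ)⁻¹
  simp only [hnormalized] at hproduct
  simpa only [torusT_planeWave hℏ] using
    hproduct (exp (I * (ℏ * (p.1 * q.2 - p.2 * q.1))) * planeWave (p + q) m)

/-- Quantized torus: with `f(θ₁,φ₁) = exp(iθ₁)` and `g(θ₂,φ₂) = exp(iφ₂)`, the limit
defining `(f ⋆_ℏ g)(θ,φ)` exists and equals `exp(iℏ)·exp(iθ)·exp(iφ)`. -/
theorem torus_product_theta_phi (ℏ : ℝ) (hℏ : 0 < ℏ) (θ φ : ℝ) :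
    Tendsto (fun n : ℕ =>
        torusT ℏ (fun p => Complex.exp (Complex.I * (p.1 : ℂ)))
          (fun p => Complex.exp (Complex.I * (p.2 : ℂ))) n (θ, φ)) atTop
      (nhds (Complex.exp (Complex.I * (ℏ : ℂ)) * Complex.exp (Complex.I * (θ : ℂ)) *
        Complex.exp (Complex.I * (φ : ℂ)))) := by
  simpa +unfoldPartialApp [planeWave, mul_add, exp_add, mul_assoc] using
    torus_product_theta_phi_general hℏ.ne' (1, 0) (0, 1) (θ, φ)
end

section
/- For every nondegenerate antisymmetric bilinear form B on ℝ^{2n} and every nonzero real constant c, the product ⋆ maps pairs of Schwartz functions to Schwartz functions and is associative: for all Schwartz f, g, h : ℝ^{2n} → ℂ, (f ⋆ g) ⋆ h = f ⋆ (g ⋆ h). -/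
open MeasureTheory Complex Filter

/-- The product associated to a bilinear form `B` on a Euclidean space and a constant `c`:
`(f ⋆ g)(m) = c⁻¹ ∫ f(x) g(y) exp(i·B(x−m, y−m)) dx dy`. -/
noncomputable def bilinStar {d : ℕ}
    (B : EuclideanSpace ℝ (Fin d) →ₗ[ℝ] EuclideanSpace ℝ (Fin d) →ₗ[ℝ] ℝ) (c : ℝ)
    (f g : EuclideanSpace ℝ (Fin d) → ℂ) : EuclideanSpace ℝ (Fin d) → ℂ :=
  fun m => ((c : ℂ))⁻¹ *
    ∫ xy : EuclideanSpace ℝ (Fin d) × EuclideanSpace ℝ (Fin d),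
      f xy.1 * g xy.2 * Complex.exp (Complex.I * ((B (xy.1 - m) (xy.2 - m) : ℝ) : ℂ))

/-!
Write `f̂ q = ∫ f x * exp (i B(x, q))` and `ĥ p = ∫ h z * exp (i B(p, z))`. Carrying out one of the
two integrations defining `f ⋆ g` and translating the other variable gives
`(f ⋆ g) m = c⁻¹ ∫ f̂ q * g (m + q) * exp (-i B(m, q))`, and symmetrically for `g ⋆ h`. Hence both
`(f ⋆ g) ⋆ h` and `f ⋆ (g ⋆ h)` are `c⁻²` times an iterated integral of
`ĥ p * f̂ q * g (m + p + q) * exp (-i (B(p, m) + B(m, q) + B(p, q)))`, and associativity is Fubini's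
theorem. Absolute integrability holds because `(p, q) ↦ (B(p, ·), B(·, q), p + q)` is injective
as soon as no nonzero vector lies in both radicals of `B`. Under the same condition, `f ⋆ g` is,
up to a unimodular factor, the pullback along an injective linear map of the Fourier transform of
the Schwartz function `exp (i B) * f ⊗ g`, hence Schwartz.
-/

open scoped SchwartzMap FourierTransform

section Schwartz

variable {E F A : Type*} [NormedAddCommGroup E] [NormedSpace ℝ E]
  [NormedAddCommGroup F] [NormedSpace ℝ F]

lemma exists_one_add_norm_pow_mul_norm_iteratedFDeriv_le (f : 𝓢(E, F)) (k n : ℕ) :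
    ∃ C, ∀ x, (1 + ‖x‖) ^ k * ‖iteratedFDeriv ℝ n f x‖ ≤ C :=
  ⟨_, SchwartzMap.one_add_le_sup_seminorm_apply (𝕜 := ℝ) (m := (k, n)) le_rfl le_rfl f⟩

lemma norm_iteratedFDeriv_comp_le_of_opNorm_le_one {G : Type*} [NormedAddCommGroup G]
    [NormedSpace ℝ G] {f : E → F} {n : ℕ} (hf : ContDiff ℝ n f) {L : G →L[ℝ] E} (hL : ‖L‖ ≤ 1)
    (x : G) : ‖iteratedFDeriv ℝ n (f ∘ L) x‖ ≤ ‖iteratedFDeriv ℝ n f (L x)‖ := by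
  rw [L.iteratedFDeriv_comp_right hf x le_rfl]
  refine (ContinuousMultilinearMap.norm_compContinuousLinearMap_le _ _).trans ?_
  exact mul_le_of_le_one_right (norm_nonneg _)
    (Finset.prod_le_one (fun _ _ => norm_nonneg L) fun _ _ => hL)

/-- The tensor product `f ⊗ g` of two Schwartz functions, as a Schwartz function on the product
space. -/
noncomputable def schwartzTensor [NormedRing A] [NormedAlgebra ℝ A] (f : 𝓢(E, A)) (g : 𝓢(F, A)) :
    𝓢(E × F, A) where
  toFun z := f z.1 * g z.2
  smooth' := ((f.smooth ⊤).comp contDiff_fst).mul ((g.smooth ⊤).comp contDiff_snd)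
  decay' k n := by
    choose C hC using fun i => exists_one_add_norm_pow_mul_norm_iteratedFDeriv_le f k i
    choose D hD using fun i => exists_one_add_norm_pow_mul_norm_iteratedFDeriv_le g k i
    refine ⟨∑ i ∈ Finset.range (n + 1), n.choose i * (C i * D (n - i)), fun z => ?_⟩
    have norm_pow_le : ‖z‖ ^ k ≤ (1 + ‖z.1‖) ^ k * (1 + ‖z.2‖) ^ k := by
      rw [← mul_pow]
      gcongr
      have h := mul_nonneg (norm_nonneg z.1) (norm_nonneg z.2)
      exact max_le (by nlinarith [norm_nonneg z.2]) (by nlinarith [norm_nonneg z.1])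
    have leibniz : ‖iteratedFDeriv ℝ n (fun z : E × F => f z.1 * g z.2) z‖ ≤
        ∑ i ∈ Finset.range (n + 1), n.choose i * ‖iteratedFDeriv ℝ i (f ∘ Prod.fst) z‖ *
          ‖iteratedFDeriv ℝ (n - i) (g ∘ Prod.snd) z‖ :=
      norm_iteratedFDeriv_mul_le (N := n) ((f.smooth n).comp contDiff_fst)
        ((g.smooth n).comp contDiff_snd) z le_rfl
    calc ‖z‖ ^ k * ‖iteratedFDeriv ℝ n (fun z : E × F => f z.1 * g z.2) z‖
        ≤ ((1 + ‖z.1‖) ^ k * (1 + ‖z.2‖) ^ k) * ∑ i ∈ Finset.range (n + 1),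
            n.choose i * ‖iteratedFDeriv ℝ i (f ∘ Prod.fst) z‖ *
              ‖iteratedFDeriv ℝ (n - i) (g ∘ Prod.snd) z‖ := by
          gcongr
      _ ≤ ((1 + ‖z.1‖) ^ k * (1 + ‖z.2‖) ^ k) * ∑ i ∈ Finset.range (n + 1),
            n.choose i * ‖iteratedFDeriv ℝ i f z.1‖ * ‖iteratedFDeriv ℝ (n - i) g z.2‖ := by
          gcongr with i
          · exact norm_iteratedFDeriv_comp_le_of_opNorm_le_one (f.smooth i)
              (ContinuousLinearMap.norm_fst_le ℝ E F) z
          · exact norm_iteratedFDeriv_comp_le_of_opNorm_le_one (g.smooth (n - i : ℕ))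
              (ContinuousLinearMap.norm_snd_le ℝ E F) z
      _ = ∑ i ∈ Finset.range (n + 1), n.choose i *
            (((1 + ‖z.1‖) ^ k * ‖iteratedFDeriv ℝ i f z.1‖) *
              ((1 + ‖z.2‖) ^ k * ‖iteratedFDeriv ℝ (n - i) g z.2‖)) := by
          rw [Finset.mul_sum]
          exact Finset.sum_congr rfl fun i _ => by ring
      _ ≤ ∑ i ∈ Finset.range (n + 1), n.choose i * (C i * D (n - i)) := by
          gcongr with i
          · exact (by positivity : (0 : ℝ) ≤ _).trans (hC i z.1)
          · exact hC i z.1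
          · exact hD (n - i) z.2

@[simp]
lemma schwartzTensor_apply [NormedRing A] [NormedAlgebra ℝ A] (f : 𝓢(E, A)) (g : 𝓢(F, A))
    (z : E × F) : schwartzTensor f g z = f z.1 * g z.2 :=
  rfl

lemma exists_schwartzMap_comp_of_injective {G : Type*} [NormedAddCommGroup G] [NormedSpace ℝ G]
    [FiniteDimensional ℝ E] (L : E →ₗ[ℝ] F) (hL : Function.Injective L) (f : 𝓢(F, G)) :
    ∃ g : 𝓢(E, G), ∀ x, g x = f (L x) := by
  obtain ⟨K, -, hK⟩ := L.exists_antilipschitzWith (LinearMap.ker_eq_bot.mpr hL)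
  exact ⟨SchwartzMap.compCLMOfAntilipschitz ℝ (g := L)
    (LinearMap.toContinuousLinearMap L).hasTemperateGrowth hK f, fun _ => rfl⟩

end Schwartz

section Oscillation

lemma iteratedDeriv_exp_I_mul_ofReal (n : ℕ) :
    iteratedDeriv n (fun t : ℝ => exp (I * t)) = fun t : ℝ => I ^ n * exp (I * t) := by
  induction n with
  | zero => simp
  | succ n ih =>
    rw [iteratedDeriv_succ, ih]
    funext t
    have hexp : HasDerivAt (fun t : ℝ => exp (I * t)) (exp (I * t) * (I * 1)) t :=
      ((ofRealCLM.hasDerivAt (x := t)).const_mul I).cexp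
    rw [(hexp.const_mul (I ^ n)).deriv]
    ring

lemma hasTemperateGrowth_exp_I_mul_ofReal :
    Function.HasTemperateGrowth (fun t : ℝ => exp (I * t)) := by
  refine ⟨(contDiff_const.mul ofRealCLM.contDiff).cexp, fun n => ⟨0, 1, fun t => ?_⟩⟩
  rw [norm_iteratedFDeriv_eq_norm_iteratedDeriv, iteratedDeriv_exp_I_mul_ofReal]
  simp [norm_exp_I_mul_ofReal]

lemma exists_schwartzMap_exp_I_mul {E : Type*} [NormedAddCommGroup E] [NormedSpace ℝ E]
    {φ : E → ℝ} (hφ : φ.HasTemperateGrowth) (f : 𝓢(E, ℂ)) :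
    ∃ g : 𝓢(E, ℂ), ∀ x, g x = exp (I * φ x) * f x :=
  ⟨SchwartzMap.smulLeftCLM ℂ (fun x => exp (I * φ x)) f, fun x =>
    SchwartzMap.smulLeftCLM_apply_apply (hasTemperateGrowth_exp_I_mul_ofReal.comp hφ) f x⟩

lemma integrable_mul_exp_I_mul {α : Type*} [TopologicalSpace α] [MeasurableSpace α]
    [OpensMeasurableSpace α] {μ : Measure α} {f : α → ℂ} (hf : Integrable f μ) {φ : α → ℝ}
    (hφ : Continuous φ) : Integrable (fun x => f x * exp (I * φ x)) μ :=
  hf.mul_bdd (c := 1)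
    (by fun_prop : Continuous fun x => exp (I * φ x)).aestronglyMeasurable
    (ae_of_all _ fun x => (norm_exp_I_mul_ofReal (φ x)).le)

lemma continuous_bilin_apply {α E F : Type*} [TopologicalSpace α]
    [NormedAddCommGroup E] [NormedSpace ℝ E] [FiniteDimensional ℝ E]
    [NormedAddCommGroup F] [NormedSpace ℝ F] [FiniteDimensional ℝ F]
    (B : E →ₗ[ℝ] F →ₗ[ℝ] ℝ) {a : α → E} {b : α → F} (ha : Continuous a) (hb : Continuous b) :
    Continuous fun x => B (a x) (b x) :=
  (by fun_prop : Continuous fun x => B.toContinuousBilinearMap (a x) (b x))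

lemma hasTemperateGrowth_bilin_apply {W E F : Type*} [NormedAddCommGroup W] [NormedSpace ℝ W]
    [NormedAddCommGroup E] [NormedSpace ℝ E] [FiniteDimensional ℝ E]
    [NormedAddCommGroup F] [NormedSpace ℝ F] [FiniteDimensional ℝ F]
    (B : E →ₗ[ℝ] F →ₗ[ℝ] ℝ) {a : W → E} {b : W → F}
    (ha : a.HasTemperateGrowth) (hb : b.HasTemperateGrowth) :
    Function.HasTemperateGrowth fun x => B (a x) (b x) :=
  B.toContinuousBilinearMap.bilinear_hasTemperateGrowth ha hb

end Oscillation

section DualFourier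

/-- The Fourier transform of `f` as a function on the dual space, with the kernel `exp (i ξ(v))`
and no normalising factor; no inner product on `V` is chosen. The argument `ξ` is an algebraic
functional so that partially applied bilinear forms can be inserted directly. -/
noncomputable def dualFourier {V : Type*} [AddCommGroup V] [Module ℝ V] [MeasurableSpace V]
    (μ : Measure V) (f : V → ℂ) (ξ : V →ₗ[ℝ] ℝ) : ℂ :=
  ∫ v, f v * exp (I * ξ v) ∂μ

lemma exists_injective_forall_two_pi_mul_inner_eq {V E : Type*} [NormedAddCommGroup V]
    [NormedSpace ℝ V] [NormedAddCommGroup E] [InnerProductSpace ℝ E] [CompleteSpace E]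
    (e : V ≃L[ℝ] E) :
    ∃ L : StrongDual ℝ V →ₗ[ℝ] E, Function.Injective L ∧
      ∀ ξ v, 2 * Real.pi * inner ℝ (e v) (L ξ) = ξ v := by
  let D := InnerProductSpace.toDual ℝ E
  let L : StrongDual ℝ V →ₗ[ℝ] E := (2 * Real.pi)⁻¹ • (D.symm.toLinearEquiv.toLinearMap ∘ₗ
    (e.arrowCongr (ContinuousLinearEquiv.refl ℝ ℝ)).toLinearEquiv.toLinearMap)
  have inner_L (ξ : StrongDual ℝ V) (v : V) : 2 * Real.pi * inner ℝ (e v) (L ξ) = ξ v := calc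
    2 * Real.pi * inner ℝ (e v) (L ξ)
      = 2 * Real.pi * inner ℝ (e v) ((2 * Real.pi)⁻¹ • D.symm (ξ ∘L e.symm)) := rfl
    _ = inner ℝ (D.symm (ξ ∘L e.symm)) (e v) := by
      rw [real_inner_smul_right, mul_inv_cancel_left₀ Real.two_pi_pos.ne', real_inner_comm]
    _ = ξ v := by simp [D, InnerProductSpace.toDual_symm_apply]
  refine ⟨L, fun ξ η h => ?_, inner_L⟩
  ext v
  rw [← inner_L ξ, h, inner_L]

lemma exists_schwartzMap_eq_dualFourier {V : Type*} [NormedAddCommGroup V] [NormedSpace ℝ V]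
    [FiniteDimensional ℝ V] [MeasurableSpace V] [BorelSpace V] (μ : Measure V)
    [μ.IsAddHaarMeasure] (f : 𝓢(V, ℂ)) :
    ∃ F : 𝓢(StrongDual ℝ V, ℂ), ∀ ξ : StrongDual ℝ V, F ξ = dualFourier μ f ξ := by
  let e := toEuclidean (E := V)
  let κ := Measure.addHaarScalarFactor (μ.map e) volume
  have map_e : μ.map e = κ • volume := Measure.isAddLeftInvariant_eq_smul _ _
  obtain ⟨L, L_injective, inner_L⟩ := exists_injective_forall_two_pi_mul_inner_eq e
  obtain ⟨F, hF⟩ := exists_schwartzMap_comp_of_injective L L_injective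
    (𝓕⁻ (SchwartzMap.compCLMOfContinuousLinearEquiv ℂ e.symm f))
  refine ⟨(κ : ℝ) • F, fun ξ => Eq.symm ?_⟩
  calc dualFourier μ f ξ
      = ∫ x, f (e.symm x) * exp (I * ξ (e.symm x)) ∂μ.map e := by
        have he : MeasurableEmbedding e := e.toHomeomorph.measurableEmbedding
        simp only [he.integral_map, dualFourier, e.symm_apply_apply, ContinuousLinearMap.coe_coe]
    _ = κ • ∫ x, f (e.symm x) * exp (I * ξ (e.symm x)) := by
        rw [map_e, integral_smul_nnreal_measure]
    _ = κ • F ξ := by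
        rw [hF, SchwartzMap.fourierInv_coe, Real.fourierInv_eq']
        congr! 3 with x
        rw [smul_eq_mul, mul_comm, mul_comm I, ← inner_L ξ, e.apply_symm_apply]
        simp

lemma exists_schwartzMap_eq_dualFourier_comp {V W : Type*} [NormedAddCommGroup V]
    [NormedSpace ℝ V] [FiniteDimensional ℝ V] [MeasurableSpace V] [BorelSpace V] (μ : Measure V)
    [μ.IsAddHaarMeasure] [NormedAddCommGroup W] [NormedSpace ℝ W] [FiniteDimensional ℝ W]
    {L : W →ₗ[ℝ] V →ₗ[ℝ] ℝ} (hL : Function.Injective L) (f : 𝓢(V, ℂ)) :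
    ∃ F : 𝓢(W, ℂ), ∀ w, F w = dualFourier μ f (L w) := by
  obtain ⟨G, hG⟩ := exists_schwartzMap_eq_dualFourier μ f
  obtain ⟨F, hF⟩ := exists_schwartzMap_comp_of_injective
    (LinearMap.toContinuousLinearMap.toLinearMap ∘ₗ L)
    (LinearMap.toContinuousLinearMap.injective.comp hL) G
  exact ⟨F, fun w => (hF w).trans (hG _)⟩

end DualFourier

section Star

variable {d : ℕ} (B : EuclideanSpace ℝ (Fin d) →ₗ[ℝ] EuclideanSpace ℝ (Fin d) →ₗ[ℝ] ℝ) (c : ℝ)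

lemma bilinStar_flip (f g : EuclideanSpace ℝ (Fin d) → ℂ) :
    bilinStar B.flip c f g = bilinStar B c g f := by
  funext m
  simp only [bilinStar, LinearMap.flip_apply, Measure.volume_eq_prod]
  rw [← integral_prod_swap]
  simp only [Prod.fst_swap, Prod.snd_swap, mul_comm (f _)]

lemma bilinStar_eq_dualFourier_coprod (f g : EuclideanSpace ℝ (Fin d) → ℂ)
    (m : EuclideanSpace ℝ (Fin d)) :
    bilinStar B c f g m = (c : ℂ)⁻¹ * (exp (I * B m m) *
      dualFourier (volume.prod volume) (fun z => exp (I * B z.1 z.2) * (f z.1 * g z.2))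
        (-(B.flip m).coprod (B m))) := by
  rw [bilinStar, dualFourier, ← integral_const_mul (exp (I * B m m))]
  congr 2 with z
  have expand : I * (B (z.1 - m) (z.2 - m) : ℝ) =
      I * B m m + I * B z.1 z.2 + I * ((-(B.flip m).coprod (B m)) z : ℝ) := by
    simp only [map_sub, LinearMap.sub_apply, LinearMap.neg_apply, LinearMap.coprod_apply,
      LinearMap.flip_apply]
    push_cast
    ring
  rw [expand, exp_add, exp_add]
  ring

lemma exists_schwartzMap_eq_bilinStar
    (hB : ∀ x, (∀ y, B x y = 0) → (∀ y, B y x = 0) → x = 0)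
    (f g : 𝓢(EuclideanSpace ℝ (Fin d), ℂ)) :
    ∃ F : 𝓢(EuclideanSpace ℝ (Fin d), ℂ), ⇑F = bilinStar B c f g := by
  let L := -(B.coprod B.flip).flip
  have L_apply (m) : L m = -(B.flip m).coprod (B m) := by ext <;> simp [L]
  have L_injective : Function.Injective L := by
    refine (injective_iff_map_eq_zero L).mpr fun m hm => hB m (fun y => ?_) fun x => ?_
    · simpa [L] using DFunLike.congr_fun hm (0, y)
    · simpa [L] using DFunLike.congr_fun hm (x, 0)
  obtain ⟨H, hH⟩ := exists_schwartzMap_exp_I_mul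
    (hasTemperateGrowth_bilin_apply B (ContinuousLinearMap.fst ℝ _ _).hasTemperateGrowth
      (ContinuousLinearMap.snd ℝ _ _).hasTemperateGrowth) (schwartzTensor f g)
  obtain ⟨G, hG⟩ := exists_schwartzMap_eq_dualFourier_comp (volume.prod volume) L_injective H
  obtain ⟨F, hF⟩ := exists_schwartzMap_exp_I_mul
    (hasTemperateGrowth_bilin_apply B .id' .id') G
  refine ⟨(c : ℂ)⁻¹ • F, funext fun m => ?_⟩
  rw [smul_apply, smul_eq_mul, hF, hG, funext hH, L_apply, bilinStar_eq_dualFourier_coprod]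
  rfl

lemma bilinStar_eq_integral_dualFourier_left {f g : EuclideanSpace ℝ (Fin d) → ℂ}
    (hf : Integrable f) (hg : Integrable g) (m : EuclideanSpace ℝ (Fin d)) :
    bilinStar B c f g m =
      (c : ℂ)⁻¹ * ∫ y, dualFourier volume f (B.flip y) * g (m + y) * exp (-(I * B m y)) := by
  have integrable_phase := integrable_mul_exp_I_mul (hf.mul_prod hg)
    (φ := fun z => B (z.1 - m) (z.2 - m)) (continuous_bilin_apply B (by fun_prop) (by fun_prop))
  rw [bilinStar, Measure.volume_eq_prod, integral_prod_symm _ integrable_phase,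
    ← integral_add_left_eq_self _ m]
  congr 2 with y
  rw [dualFourier, mul_assoc, ← integral_mul_const]
  congr 1 with x
  have expand : I * (B (x - m) (m + y - m) : ℝ) = I * B.flip y x + -(I * B m y) := by
    simp only [add_sub_cancel_left, map_sub, LinearMap.sub_apply, LinearMap.flip_apply]
    push_cast
    ring
  rw [expand, exp_add]
  ring

lemma bilinStar_eq_integral_dualFourier_right {f g : EuclideanSpace ℝ (Fin d) → ℂ}
    (hf : Integrable f) (hg : Integrable g) (m : EuclideanSpace ℝ (Fin d)) :
    bilinStar B c f g m =
      (c : ℂ)⁻¹ * ∫ x, dualFourier volume g (B x) * f (m + x) * exp (-(I * B x m)) := by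
  rw [← bilinStar_flip, bilinStar_eq_integral_dualFourier_left B.flip c hg hf]
  simp only [LinearMap.flip_flip, LinearMap.flip_apply]

/-- The integrand in `(p, q)` whose two iterated integrals are, up to `c⁻²`, the values at `m` of
`(f ⋆ g) ⋆ h` and of `f ⋆ (g ⋆ h)`. -/
noncomputable def starAssocKernel (f g h : EuclideanSpace ℝ (Fin d) → ℂ)
    (m p q : EuclideanSpace ℝ (Fin d)) : ℂ :=
  dualFourier volume h (B p) * dualFourier volume f (B.flip q) * g (m + (p + q)) *
    exp (I * (-(B p m + B m q + B p q) : ℝ))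

lemma starAssocKernel_flip (f g h : EuclideanSpace ℝ (Fin d) → ℂ)
    (m p q : EuclideanSpace ℝ (Fin d)) :
    starAssocKernel B.flip h g f m q p = starAssocKernel B f g h m p q := by
  simp only [starAssocKernel, LinearMap.flip_flip, LinearMap.flip_apply, add_comm q p,
    add_comm (B m q), mul_comm (dualFourier volume f _)]

lemma integrable_starAssocKernel
    (hB : ∀ x, (∀ y, B x y = 0) → (∀ y, B y x = 0) → x = 0)
    (f g h : 𝓢(EuclideanSpace ℝ (Fin d), ℂ)) (m : EuclideanSpace ℝ (Fin d)) :
    Integrable (fun z => starAssocKernel B f g h m z.1 z.2) (volume.prod volume) := by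
  obtain ⟨F, hF⟩ := exists_schwartzMap_eq_dualFourier volume f
  obtain ⟨H, hH⟩ := exists_schwartzMap_eq_dualFourier volume h
  let toDual := LinearMap.toContinuousLinearMap (𝕜 := ℝ) (E := EuclideanSpace ℝ (Fin d)) (F' := ℝ)
  let J := (LinearMap.prodMap (toDual.toLinearMap ∘ₗ B) (toDual.toLinearMap ∘ₗ B.flip)).prod
    (LinearMap.fst ℝ _ _ + LinearMap.snd ℝ _ _)
  have J_injective : Function.Injective J := by
    refine (injective_iff_map_eq_zero J).mpr fun ⟨p, q⟩ hJ => ?_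
    have B_p (y) : B p y = 0 := DFunLike.congr_fun (congr_arg (fun w => w.1.1) hJ) y
    have B_q (x) : B x q = 0 := DFunLike.congr_fun (congr_arg (fun w => w.1.2) hJ) x
    obtain rfl : q = -p := eq_neg_of_add_eq_zero_right (congr_arg Prod.snd hJ)
    have p_eq_zero : p = 0 := hB p B_p fun x => by simpa using B_q x
    simp [p_eq_zero]
  obtain ⟨T, hT⟩ := exists_schwartzMap_comp_of_injective J J_injective
    (schwartzTensor (schwartzTensor H F) (SchwartzMap.compSubConstCLM ℝ (-m) g))
  have T_apply (p q) : T (p, q) =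
      dualFourier volume h (B p) * dualFourier volume f (B.flip q) * g (m + (p + q)) := by
    rw [hT, schwartzTensor_apply, schwartzTensor_apply, hH, hF, SchwartzMap.compSubConstCLM_apply,
      sub_neg_eq_add, add_comm m]
    rfl
  have continuous_phase : Continuous fun z : EuclideanSpace ℝ (Fin d) × EuclideanSpace ℝ (Fin d) =>
      -(B z.1 m + B m z.2 + B z.1 z.2) :=
    (((continuous_bilin_apply B continuous_fst continuous_const).add
      (continuous_bilin_apply B continuous_const continuous_snd)).add
      (continuous_bilin_apply B continuous_fst continuous_snd)).neg
  have integrable_T : Integrable T (volume.prod volume) :=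
    T.integrable (hμ := Measure.IsAddHaarMeasure.instHasTemperateGrowth)
  simpa only [starAssocKernel, ← T_apply] using
    integrable_mul_exp_I_mul integrable_T continuous_phase

lemma bilinStar_bilinStar_left_eq_integral
    (hB : ∀ x, (∀ y, B x y = 0) → (∀ y, B y x = 0) → x = 0)
    (f g h : 𝓢(EuclideanSpace ℝ (Fin d), ℂ)) (m : EuclideanSpace ℝ (Fin d)) :
    bilinStar B c (bilinStar B c f g) h m =
      (c : ℂ)⁻¹ * ((c : ℂ)⁻¹ * ∫ p, ∫ q, starAssocKernel B f g h m p q) := by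
  obtain ⟨F, hF⟩ := exists_schwartzMap_eq_bilinStar B c hB f g
  rw [← hF, bilinStar_eq_integral_dualFourier_right B c F.integrable h.integrable, hF]
  congr 1
  rw [← integral_const_mul]
  congr 1 with p
  rw [bilinStar_eq_integral_dualFourier_left B c f.integrable g.integrable, mul_left_comm,
    mul_assoc, ← integral_const_mul, ← integral_mul_const]
  congr 2 with q
  have phase : I * (-(B p m + B m q + B p q) : ℝ) = -(I * B (m + p) q) + -(I * B p m) := by
    simp only [map_add, LinearMap.add_apply]
    push_cast
    ring
  rw [starAssocKernel, phase, exp_add, add_assoc]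
  ring

theorem bilinStar_assoc
    (hB : ∀ x, (∀ y, B x y = 0) → (∀ y, B y x = 0) → x = 0)
    (f g h : 𝓢(EuclideanSpace ℝ (Fin d), ℂ)) :
    bilinStar B c (bilinStar B c f g) h = bilinStar B c f (bilinStar B c g h) := by
  have hB_flip : ∀ x, (∀ y, B.flip x y = 0) → (∀ y, B.flip y x = 0) → x = 0 :=
    fun x left right => hB x right left
  funext m
  rw [← bilinStar_flip B c (bilinStar B c g h) f, ← bilinStar_flip B c h g,
    bilinStar_bilinStar_left_eq_integral B c hB,
    bilinStar_bilinStar_left_eq_integral B.flip c hB_flip]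
  simp only [starAssocKernel_flip]
  rw [integral_integral_swap (integrable_starAssocKernel B hB f g h m)]

end Star

theorem bilinStar_schwartz_and_assoc_general {d : ℕ}
    (B : EuclideanSpace ℝ (Fin d) →ₗ[ℝ] EuclideanSpace ℝ (Fin d) →ₗ[ℝ] ℝ)
    (hB : ∀ x, (∀ y, B x y = 0) → (∀ y, B y x = 0) → x = 0) (c : ℝ) (hc : c ≠ 0) :
    (∀ f g : 𝓢(EuclideanSpace ℝ (Fin d), ℂ),
      ∃ F : 𝓢(EuclideanSpace ℝ (Fin d), ℂ), ⇑F = bilinStar B c f g) ∧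
    (∀ f g h : 𝓢(EuclideanSpace ℝ (Fin d), ℂ),
      bilinStar B c (bilinStar B c f g) h = bilinStar B c f (bilinStar B c g h)) :=
  ⟨exists_schwartzMap_eq_bilinStar B c hB, bilinStar_assoc B c hB⟩

/-- For every nondegenerate antisymmetric bilinear form  on ℝ^{2n} and every nonzero real
constant , the product ⋆ maps pairs of Schwartz functions to Schwartz functions and is
associative. -/
theorem bilinStar_schwartz_and_assoc (n : ℕ) (hn : 1 ≤ n)
    (B : EuclideanSpace ℝ (Fin (2 * n)) →ₗ[ℝ] EuclideanSpace ℝ (Fin (2 * n)) →ₗ[ℝ] ℝ)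
    (hB_anti : ∀ x y, B x y = -B y x)
    (hB_nondeg : ∀ x, (∀ y, B x y = 0) → x = 0)
    (c : ℝ) (hc : c ≠ 0) :
    (∀ f g : SchwartzMap (EuclideanSpace ℝ (Fin (2 * n))) ℂ,
      ∃ F : SchwartzMap (EuclideanSpace ℝ (Fin (2 * n))) ℂ, ⇑F = bilinStar B c (⇑f) (⇑g)) ∧
    (∀ f g h : SchwartzMap (EuclideanSpace ℝ (Fin (2 * n))) ℂ,
      bilinStar B c (bilinStar B c (⇑f) (⇑g)) (⇑h)
        = bilinStar B c (⇑f) (bilinStar B c (⇑g) (⇑h))) :=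
  bilinStar_schwartz_and_assoc_general B (fun x hx _ => hB_nondeg x hx) c hc
end

section
/- For every ℏ > 0 and every fixed real z ≠ 0, the leafwise product ⋆_{ℏ,z} on the dual of the Heisenberg Lie algebra maps pairs of Schwartz functions to Schwartz functions and is associative: for all Schwartz f, g, h : ℝ² → ℂ, (f ⋆_{ℏ,z} g) ⋆_{ℏ,z} h = f ⋆_{ℏ,z} (g ⋆_{ℏ,z} h). -/
open MeasureTheory Complex Filter

/-- The leafwise Heisenberg-dual kernel at base point `m = (x,y)`, on `a = (x'',y'')`,
`b = (x',y')`: `exp((i/(zℏ))·[(x''−x)(y'−y) − (x'−x)(y''−y)])`. -/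
noncomputable def heisKernel (ℏ z : ℝ) (m a b : ℝ × ℝ) : ℂ :=
  Complex.exp (Complex.I / (z * ℏ) *
    (((a.1 - m.1) * (b.2 - m.2) - (b.1 - m.1) * (a.2 - m.2) : ℝ) : ℂ))

/-- The leafwise product on the symplectic leaf `{z = const}` of the dual of the Heisenberg
Lie algebra: `(f ⋆_{ℏ,z} g)(x,y) = (2πzℏ)⁻² ∫ f g · heisKernel`. -/
noncomputable def heisProd (ℏ z : ℝ) (f g : ℝ × ℝ → ℂ) : ℝ × ℝ → ℂ :=
  fun m => ((2 * Real.pi * z * ℏ) ^ 2 : ℝ)⁻¹ •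
    ∫ ab : (ℝ × ℝ) × (ℝ × ℝ), f ab.1 * g ab.2 * heisKernel ℏ z m ab.1 ab.2

/-!
Write `𝐞 x = exp (2πix)` and let `ω = (2πzℏ)⁻¹ • areaForm`. Up to a constant, `⋆` is the Moyal
product with phase `𝐞 (ω (a - m) (b - m))`. For alternating `ω` this phase splits as
`𝐞 (-ω (a - b) m) * 𝐞 (ω a b)`, so `f ⋆ g` is the Fourier transform of the Schwartz function
`𝐞 (ω a b) f(a) g(b)` on `ℝ² × ℝ²`, restricted to the frequencies `(a, b) ↦ ω (a - b) m`; these grow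
with `m` because `ω` is nondegenerate, hence `f ⋆ g` is Schwartz.

Let `F̂` be the symplectic Fourier transform and `♯` the twisted convolution. Integrating out one
variable gives `f ⋆ g = f̂ ♯ g`, and `(F ♯ g)^ = F ♯ ĝ`. As `♯` is associative by Fubini,
`(f ⋆ g) ⋆ h = (f̂ ♯ ĝ) ♯ h = f̂ ♯ (ĝ ♯ h) = f ⋆ (g ⋆ h)`.
-/

open scoped FourierTransform SchwartzMap

section TwistedConvolution

section Oscillation

variable {X E : Type*} [MeasurableSpace X] [NormedAddCommGroup E] [NormedSpace ℂ E] {ν : Measure X}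

theorem integral_circle_smul (c : Circle) (f : X → E) : ∫ x, c • f x ∂ν = c • ∫ x, f x ∂ν := by
  simp only [Circle.smul_def, integral_smul]

theorem integrable_fourierChar_smul [TopologicalSpace X] [OpensMeasurableSpace X] {k : X → ℝ}
    (hk : Continuous k) {f : X → E} (hf : Integrable f ν) :
    Integrable (fun x ↦ 𝐞 (k x) • f x) ν := by
  have hcont : Continuous fun x ↦ 𝐞 (k x) := Real.continuous_fourierChar.comp hk
  simp_rw [← integrable_norm_iff (hcont.aestronglyMeasurable.fun_smul hf.1), Circle.norm_smul]
  exact hf.norm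

end Oscillation

variable {V : Type*} [NormedAddCommGroup V] [NormedSpace ℝ V] [MeasurableSpace V]

/-- The Moyal product for the bilinear form `ω`, whose kernel is the exponential of the phase
`2πi ω (a - m) (b - m)`. The normalising constant in front of the integral is left out. -/
noncomputable def moyalProd (μ : Measure V) (ω : V →L[ℝ] V →L[ℝ] ℝ) (f g : V → ℂ) (m : V) : ℂ :=
  ∫ p : V × V, 𝐞 (ω (p.1 - m) (p.2 - m)) • (f p.1 * g p.2) ∂μ.prod μ

/-- The convolution twisted by the cocycle `𝐞 ∘ ω`, which represents the Moyal product on the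
Fourier side. -/
noncomputable def twistedConv (μ : Measure V) (ω : V →L[ℝ] V →L[ℝ] ℝ) (F G : V → ℂ) (w : V) : ℂ :=
  ∫ v, 𝐞 (ω w v) • (F v * G (w - v)) ∂μ

variable [BorelSpace V] [SecondCountableTopology V] {μ : Measure V} [SFinite μ]
  [μ.IsAddLeftInvariant] {ω : V →L[ℝ] V →L[ℝ] ℝ} {f g h : V → ℂ}

theorem integrable_twistedConv_integrand (hf : Integrable f μ) (hg : Integrable g μ) :
    Integrable (fun p : V × V ↦ 𝐞 (ω p.1 p.2) • (f p.2 * g (p.1 - p.2))) (μ.prod μ) :=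
  integrable_fourierChar_smul ω.continuous₂
    (hf.convolution_integrand (ContinuousLinearMap.mul ℝ ℂ) hg)

theorem integrable_twistedConv (hf : Integrable f μ) (hg : Integrable g μ) :
    Integrable (twistedConv μ ω f g) μ :=
  (integrable_twistedConv_integrand hf hg).integral_prod_left

theorem fourierIntegral_twistedConv (hω : ω.toLinearMap₁₂.IsAlt) (hf : Integrable f μ)
    (hg : Integrable g μ) :
    VectorFourier.fourierIntegral 𝐞 μ ω.toLinearMap₁₂ (twistedConv μ ω f g) =
      twistedConv μ ω f (VectorFourier.fourierIntegral 𝐞 μ ω.toLinearMap₁₂ g) := by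
  ext w
  have hint : Integrable
      (fun p : V × V ↦ 𝐞 (-ω p.1 w) • 𝐞 (ω p.1 p.2) • (f p.2 * g (p.1 - p.2))) (μ.prod μ) :=
    integrable_fourierChar_smul (by fun_prop) (integrable_twistedConv_integrand hf hg)
  have hphase (v x : V) : 𝐞 (-ω (x + v) w) * 𝐞 (ω (x + v) v) = 𝐞 (ω w v) * 𝐞 (-ω x (w - v)) := by
    simp_rw [← AddChar.map_add_eq_mul]
    congr 1
    have hvv : ω v v = 0 := hω.self_eq_zero v
    have hvw : -ω v w = ω w v := hω.neg v w
    simp only [map_add, map_sub, add_apply]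
    linear_combination hvv + hvw
  calc ∫ x, 𝐞 (-ω x w) • ∫ v, 𝐞 (ω x v) • (f v * g (x - v)) ∂μ ∂μ
      = ∫ x, ∫ v, 𝐞 (-ω x w) • 𝐞 (ω x v) • (f v * g (x - v)) ∂μ ∂μ := by
        simp_rw [integral_circle_smul]
    _ = ∫ v, ∫ x, 𝐞 (-ω x w) • 𝐞 (ω x v) • (f v * g (x - v)) ∂μ ∂μ :=
      integral_integral_swap hint
    _ = ∫ v, ∫ x, 𝐞 (-ω (x + v) w) • 𝐞 (ω (x + v) v) • (f v * g (x + v - v)) ∂μ ∂μ := by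
      congr! 2 with v
      exact (integral_add_right_eq_self _ v).symm
    _ = ∫ v, 𝐞 (ω w v) • (f v * ∫ x, 𝐞 (-ω x (w - v)) • g x ∂μ) ∂μ := by
      simp_rw [smul_smul, hphase, mul_smul, add_sub_cancel_right, integral_circle_smul,
        ← mul_smul_comm, integral_const_mul, mul_smul_comm]

theorem twistedConv_assoc (hω : ω.toLinearMap₁₂.IsAlt) (hf : Integrable f μ) (hg : Integrable g μ)
    (hh : AEStronglyMeasurable h μ) {C : ℝ} (hC : ∀ x, ‖h x‖ ≤ C) :
    twistedConv μ ω (twistedConv μ ω f g) h = twistedConv μ ω f (twistedConv μ ω g h) := by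
  ext w
  have hint : Integrable (fun p : V × V ↦
      𝐞 (ω w p.1) • (𝐞 (ω p.1 p.2) • (f p.2 * g (p.1 - p.2)) * h (w - p.1))) (μ.prod μ) := by
    refine integrable_fourierChar_smul (by fun_prop) <|
      (integrable_twistedConv_integrand hf hg).mul_bdd (c := C) ?_ (ae_of_all _ fun p ↦ hC _)
    exact (hh.comp_quasiMeasurePreserving
      (quasiMeasurePreserving_sub_left_of_right_invariant μ w)).comp_fst
  have hphase (v x : V) : 𝐞 (ω w (x + v)) * 𝐞 (ω (x + v) v) = 𝐞 (ω w v) * 𝐞 (ω (w - v) x) := by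
    simp_rw [← AddChar.map_add_eq_mul]
    congr 1
    have hvv : ω v v = 0 := hω.self_eq_zero v
    have hvx : -ω v x = ω x v := hω.neg v x
    simp only [map_add, map_sub, add_apply, sub_apply]
    linear_combination hvv - hvx
  calc ∫ u, 𝐞 (ω w u) • ((∫ v, 𝐞 (ω u v) • (f v * g (u - v)) ∂μ) * h (w - u)) ∂μ
      = ∫ u, ∫ v, 𝐞 (ω w u) • (𝐞 (ω u v) • (f v * g (u - v)) * h (w - u)) ∂μ ∂μ := by
        simp_rw [integral_circle_smul, integral_mul_const]
    _ = ∫ v, ∫ u, 𝐞 (ω w u) • (𝐞 (ω u v) • (f v * g (u - v)) * h (w - u)) ∂μ ∂μ :=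
      integral_integral_swap hint
    _ = ∫ v, ∫ x, 𝐞 (ω w (x + v)) •
          (𝐞 (ω (x + v) v) • (f v * g (x + v - v)) * h (w - (x + v))) ∂μ ∂μ := by
      congr! 2 with v
      exact (integral_add_right_eq_self _ v).symm
    _ = ∫ v, 𝐞 (ω w v) • (f v * ∫ x, 𝐞 (ω (w - v) x) • (g x * h (w - v - x)) ∂μ) ∂μ := by
      simp_rw [smul_mul_assoc, smul_smul, hphase, mul_smul, add_sub_cancel_right,
        integral_circle_smul, mul_assoc, ← mul_smul_comm, integral_const_mul, mul_smul_comm,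
        sub_sub, add_comm]

variable [μ.IsNegInvariant]

theorem moyalProd_eq_twistedConv (hf : Integrable f μ) (hg : Integrable g μ) :
    moyalProd μ ω f g =
      twistedConv μ ω (VectorFourier.fourierIntegral 𝐞 μ ω.toLinearMap₁₂ f) g := by
  ext m
  have hint : Integrable
      (fun p : V × V ↦ 𝐞 (ω (p.1 - m) (p.2 - m)) • (f p.1 * g p.2)) (μ.prod μ) :=
    integrable_fourierChar_smul (by fun_prop) (hf.mul_prod hg)
  have hphase (a v : V) : 𝐞 (ω (a - m) (m - v - m)) = 𝐞 (ω m v) * 𝐞 (-ω a v) := by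
    rw [← AddChar.map_add_eq_mul]
    congr 1
    simp only [sub_sub_cancel_left, map_neg, map_sub, sub_apply]
    ring
  calc moyalProd μ ω f g m
      = ∫ b, ∫ a, 𝐞 (ω (a - m) (b - m)) • (f a * g b) ∂μ ∂μ := integral_prod_symm _ hint
    _ = ∫ v, ∫ a, 𝐞 (ω (a - m) (m - v - m)) • (f a * g (m - v)) ∂μ ∂μ :=
      (integral_sub_left_eq_self
        (fun b ↦ ∫ a, 𝐞 (ω (a - m) (b - m)) • (f a * g b) ∂μ) μ m).symm
    _ = ∫ v, 𝐞 (ω m v) • ((∫ a, 𝐞 (-ω a v) • f a ∂μ) * g (m - v)) ∂μ := by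
      simp_rw [hphase, mul_smul, integral_circle_smul, ← smul_mul_assoc, integral_mul_const,
        smul_mul_assoc]

theorem moyalProd_assoc (hω : ω.toLinearMap₁₂.IsAlt) (hf : Integrable f μ)
    (hf' : Integrable (VectorFourier.fourierIntegral 𝐞 μ ω.toLinearMap₁₂ f) μ)
    (hg : Integrable g μ)
    (hg' : Integrable (VectorFourier.fourierIntegral 𝐞 μ ω.toLinearMap₁₂ g) μ)
    (hh : Integrable h μ) {C : ℝ} (hC : ∀ x, ‖h x‖ ≤ C) :
    moyalProd μ ω (moyalProd μ ω f g) h = moyalProd μ ω f (moyalProd μ ω g h) := by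
  rw [moyalProd_eq_twistedConv hf hg, moyalProd_eq_twistedConv hg hh,
    moyalProd_eq_twistedConv (integrable_twistedConv hf' hg) hh,
    moyalProd_eq_twistedConv hf (integrable_twistedConv hg' hh),
    fourierIntegral_twistedConv hω hf' hg, twistedConv_assoc hω hf' hg' hh.1 hC]

end TwistedConvolution

theorem iteratedDeriv_fourierChar (n : ℕ) :
    iteratedDeriv n (fun x : ℝ ↦ (𝐞 x : ℂ)) = fun x ↦ (2 * Real.pi * I) ^ n * 𝐞 x := by
  induction n with
  | zero => simp
  | succ n ih =>
    ext x
    rw [iteratedDeriv_succ, ih, deriv_const_mul_field, Real.deriv_fourierChar, pow_succ]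
    ring

theorem contDiff_fourierChar {n : WithTop ℕ∞} : ContDiff ℝ n (fun x : ℝ ↦ (𝐞 x : ℂ)) := by
  simp only [Real.fourierChar_apply]
  exact ((ofRealCLM.contDiff.comp (contDiff_const.mul contDiff_id)).mul contDiff_const).cexp

theorem hasTemperateGrowth_fourierChar : (fun x : ℝ ↦ (𝐞 x : ℂ)).HasTemperateGrowth := by
  refine ⟨contDiff_fourierChar, fun n ↦ ⟨0, (2 * Real.pi) ^ n, fun x ↦ ?_⟩⟩
  simp [norm_iteratedFDeriv_eq_norm_iteratedDeriv, iteratedDeriv_fourierChar,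
    abs_of_pos Real.pi_pos, Circle.norm_coe]

theorem hasTemperateGrowth_fourierChar_bilinear {E F : Type*} [NormedAddCommGroup E]
    [NormedSpace ℝ E] [NormedAddCommGroup F] [NormedSpace ℝ F] (B : E →L[ℝ] F →L[ℝ] ℝ) :
    (fun p : E × F ↦ (𝐞 (B p.1 p.2) : ℂ)).HasTemperateGrowth :=
  hasTemperateGrowth_fourierChar.comp <| B.bilinear_hasTemperateGrowth
    (ContinuousLinearMap.fst ℝ E F).hasTemperateGrowth
    (ContinuousLinearMap.snd ℝ E F).hasTemperateGrowth

section ExteriorProduct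

variable {E F G H W : Type*} [NormedAddCommGroup E] [NormedSpace ℝ E]
  [NormedAddCommGroup F] [NormedSpace ℝ F] [NormedAddCommGroup G] [NormedSpace ℝ G]
  [NormedAddCommGroup H] [NormedSpace ℝ H] [NormedAddCommGroup W] [NormedSpace ℝ W]

theorem norm_iteratedFDeriv_comp_le_of_norm_le_one {f : E → F} {n : ℕ} (hf : ContDiff ℝ n f)
    {L : W →L[ℝ] E} (hL : ‖L‖ ≤ 1) (x : W) :
    ‖iteratedFDeriv ℝ n (f ∘ L) x‖ ≤ ‖iteratedFDeriv ℝ n f (L x)‖ := by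
  rw [L.iteratedFDeriv_comp_right hf x le_rfl]
  refine (ContinuousMultilinearMap.norm_compContinuousLinearMap_le _ _).trans ?_
  exact mul_le_of_le_one_right (norm_nonneg _) (Finset.prod_le_one (by simp) (by simp [hL]))

theorem norm_prod_pow_le {E W : Type*} [SeminormedAddGroup E] [SeminormedAddGroup W] (p : E × W)
    (k : ℕ) : ‖p‖ ^ k ≤ ‖p.1‖ ^ k + ‖p.2‖ ^ k := by
  rcases le_total ‖p.1‖ ‖p.2‖ with h | h
  · rw [Prod.norm_def, max_eq_right h]
    exact le_add_of_nonneg_left (by positivity)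
  · rw [Prod.norm_def, max_eq_left h]
    exact le_add_of_nonneg_right (by positivity)

theorem norm_iteratedFDeriv_exteriorProduct_le (B : F →L[ℝ] G →L[ℝ] H) {f : E → F} {g : W → G}
    {n : ℕ} (hf : ContDiff ℝ n f) (hg : ContDiff ℝ n g) (p : E × W) :
    ‖iteratedFDeriv ℝ n (fun p : E × W ↦ B (f p.1) (g p.2)) p‖ ≤
      ‖B‖ * ∑ i ∈ Finset.range (n + 1), n.choose i *
        ‖iteratedFDeriv ℝ i f p.1‖ * ‖iteratedFDeriv ℝ (n - i) g p.2‖ := by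
  have hfst {i : ℕ} (hi : i ≤ n) :
      ‖iteratedFDeriv ℝ i (fun p : E × W ↦ f p.1) p‖ ≤ ‖iteratedFDeriv ℝ i f p.1‖ :=
    norm_iteratedFDeriv_comp_le_of_norm_le_one (hf.of_le (mod_cast hi))
      (ContinuousLinearMap.norm_fst_le ℝ E W) p
  have hsnd {j : ℕ} (hj : j ≤ n) :
      ‖iteratedFDeriv ℝ j (fun p : E × W ↦ g p.2) p‖ ≤ ‖iteratedFDeriv ℝ j g p.2‖ :=
    norm_iteratedFDeriv_comp_le_of_norm_le_one (hg.of_le (mod_cast hj))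
      (ContinuousLinearMap.norm_snd_le ℝ E W) p
  refine (B.norm_iteratedFDeriv_le_of_bilinear (hf.comp contDiff_fst) (hg.comp contDiff_snd) p
    le_rfl).trans ?_
  gcongr with i hi
  · exact hfst (Finset.mem_range_succ_iff.mp hi)
  · exact hsnd (n.sub_le i)

/-- The exterior product `p ↦ B (f p.1) (g p.2)` of two Schwartz functions. The values are
combined by an arbitrary continuous bilinear map `B`. -/
noncomputable def schwartzExteriorProduct (B : F →L[ℝ] G →L[ℝ] H) (f : 𝓢(E, F)) (g : 𝓢(W, G)) :
    𝓢(E × W, H) where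
  toFun p := B (f p.1) (g p.2)
  smooth' := B.isBoundedBilinearMap.contDiff.comp
    (((f.smooth ⊤).comp contDiff_fst).prodMk ((g.smooth ⊤).comp contDiff_snd))
  decay' k n := by
    let S k i := SchwartzMap.seminorm ℝ k i f
    let T k j := SchwartzMap.seminorm ℝ k j g
    refine ⟨‖B‖ * ∑ i ∈ Finset.range (n + 1), n.choose i *
      (S k i * T 0 (n - i) + S 0 i * T k (n - i)), fun p ↦ ?_⟩
    have hf (k i) : ‖p.1‖ ^ k * ‖iteratedFDeriv ℝ i f p.1‖ ≤ S k i := f.le_seminorm ℝ k i p.1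
    have hg (k j) : ‖p.2‖ ^ k * ‖iteratedFDeriv ℝ j g p.2‖ ≤ T k j := g.le_seminorm ℝ k j p.2
    have hf₀ (i) : ‖iteratedFDeriv ℝ i f p.1‖ ≤ S 0 i := f.norm_iteratedFDeriv_le_seminorm ℝ i p.1
    have hg₀ (j) : ‖iteratedFDeriv ℝ j g p.2‖ ≤ T 0 j := g.norm_iteratedFDeriv_le_seminorm ℝ j p.2
    calc ‖p‖ ^ k * ‖iteratedFDeriv ℝ n (fun p : E × W ↦ B (f p.1) (g p.2)) p‖
        ≤ (‖p.1‖ ^ k + ‖p.2‖ ^ k) * (‖B‖ * ∑ i ∈ Finset.range (n + 1), n.choose i *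
            ‖iteratedFDeriv ℝ i f p.1‖ * ‖iteratedFDeriv ℝ (n - i) g p.2‖) := by
          gcongr
          · exact norm_prod_pow_le p k
          · exact norm_iteratedFDeriv_exteriorProduct_le B (f.smooth n) (g.smooth n) p
      _ = ‖B‖ * ∑ i ∈ Finset.range (n + 1), n.choose i *
            ((‖p.1‖ ^ k * ‖iteratedFDeriv ℝ i f p.1‖) * ‖iteratedFDeriv ℝ (n - i) g p.2‖ +
              ‖iteratedFDeriv ℝ i f p.1‖ * (‖p.2‖ ^ k * ‖iteratedFDeriv ℝ (n - i) g p.2‖)) := by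
          rw [mul_left_comm, Finset.mul_sum]
          congr! 2
          ring
      _ ≤ _ := by
          gcongr
          exacts [hf k _, hg₀ _, hf₀ _, hg k _]

end ExteriorProduct

section Pairing

variable {E F W : Type*} [NormedAddCommGroup E] [NormedSpace ℝ E] [NormedAddCommGroup F]
  [NormedSpace ℂ F] [NormedAddCommGroup W] [NormedSpace ℝ W] [FiniteDimensional ℝ W]
  {L : E →L[ℝ] W →L[ℝ] ℝ}

theorem exists_norm_le_mul_abs_apply (hL : L.toLinearMap₁₂.SeparatingRight) :
    ∃ C : ℝ, 0 ≤ C ∧ ∀ w, ∃ v, ‖v‖ ≤ 1 ∧ ‖w‖ ≤ C * |L v w| := by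
  have hker : LinearMap.ker L.flip.toLinearMap = ⊥ := by
    refine LinearMap.ker_eq_bot'.2 fun w hw ↦ hL w fun v ↦ ?_
    exact DFunLike.congr_fun hw v
  obtain ⟨K, -, hK⟩ := L.flip.toLinearMap.exists_antilipschitzWith hker
  have hbound w : ‖w‖ ≤ K * ‖L.flip w‖ := by
    simpa using hK.le_mul_dist w 0
  refine ⟨2 * K, by positivity, fun w ↦ ?_⟩
  rcases eq_or_ne (L.flip w) 0 with h0 | h0
  · exact ⟨0, by simp, by simpa [h0] using hbound w⟩
  obtain ⟨v, hv, hvw⟩ := (L.flip w).exists_lt_apply_of_lt_opNorm (half_lt_self (norm_pos_iff.2 h0))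
  refine ⟨v, hv.le, ?_⟩
  calc ‖w‖ ≤ 2 * K * (‖L.flip w‖ / 2) := (hbound w).trans_eq (by ring)
    _ ≤ 2 * K * |L v w| := by gcongr; exact hvw.le

variable [FiniteDimensional ℝ E] [MeasurableSpace E] [BorelSpace E]

/-- The Fourier transform of a Schwartz function, with frequencies in `W` paired with `E` by `L`.
The nondegeneracy condition embeds `W` in the dual of `E`, which makes the transform decay. -/
noncomputable def schwartzFourierIntegral (μ : Measure E) [μ.IsAddHaarMeasure]
    (hL : L.toLinearMap₁₂.SeparatingRight) (f : 𝓢(E, F)) : 𝓢(W, F) where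
  toFun := VectorFourier.fourierIntegral 𝐞 μ L.toLinearMap₁₂ f
  smooth' := VectorFourier.contDiff_fourierIntegral L fun n _ ↦ f.integrable_pow_mul μ n
  decay' k n := by
    obtain ⟨C, hC, hpair⟩ := exists_norm_le_mul_abs_apply hL
    refine ⟨C ^ k * ((2 * Real.pi * ‖L‖) ^ n * (2 * n + 2) ^ k *
      ∑ p ∈ Finset.range (n + 1) ×ˢ Finset.range (k + 1),
        ∫ v, ‖v‖ ^ p.1 * ‖iteratedFDeriv ℝ p.2 f v‖ ∂μ), fun w ↦ ?_⟩
    obtain ⟨v, hv, hvw⟩ := hpair w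
    have hbound := VectorFourier.pow_mul_norm_iteratedFDeriv_fourierIntegral_le L (μ := μ)
      (f.smooth ⊤) (fun k n _ _ ↦ f.integrable_pow_mul_iteratedFDeriv μ k n)
      (k := n) (n := k) le_top le_top v w
    set D := iteratedFDeriv ℝ n (VectorFourier.fourierIntegral 𝐞 μ L.toLinearMap₁₂ f) w
    calc ‖w‖ ^ k * ‖D‖ ≤ (C * |L v w|) ^ k * ‖D‖ := by gcongr
      _ = C ^ k * (|L v w| ^ k * ‖D‖) := by ring
      _ ≤ _ := by
        refine mul_le_mul_of_nonneg_left (hbound.trans ?_) (by positivity)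
        simp_rw [mul_assoc]
        exact mul_le_of_le_one_left (by positivity) (pow_le_one₀ (norm_nonneg v) hv)

end Pairing

section Moyal

variable {V : Type*} [NormedAddCommGroup V] [NormedSpace ℝ V] {ω : V →L[ℝ] V →L[ℝ] ℝ}

theorem separatingRight_comp_fst_sub_snd (hω : ω.toLinearMap₁₂.SeparatingRight) :
    LinearMap.SeparatingRight
      (ω ∘L (ContinuousLinearMap.fst ℝ V V - ContinuousLinearMap.snd ℝ V V)).toLinearMap₁₂ :=
  fun w hw ↦ hω w fun a ↦ by simpa using hw (a, 0)

variable [MeasurableSpace V] {μ : Measure V}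

theorem moyalProd_smul_left (c : ℝ) (f g : V → ℂ) :
    moyalProd μ ω (c • f) g = c • moyalProd μ ω f g := by
  ext m
  simp only [moyalProd, Pi.smul_apply, smul_mul_assoc, smul_comm _ c, integral_smul]

theorem moyalProd_smul_right (c : ℝ) (f g : V → ℂ) :
    moyalProd μ ω f (c • g) = c • moyalProd μ ω f g := by
  ext m
  simp only [moyalProd, Pi.smul_apply, mul_smul_comm, smul_comm _ c, integral_smul]

theorem moyalProd_eq_fourierIntegral (hω : ω.toLinearMap₁₂.IsAlt) (f g : V → ℂ) :
    moyalProd μ ω f g = VectorFourier.fourierIntegral 𝐞 (μ.prod μ)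
      (ω ∘L (ContinuousLinearMap.fst ℝ V V - ContinuousLinearMap.snd ℝ V V)).toLinearMap₁₂
      (fun p ↦ 𝐞 (ω p.1 p.2) • (f p.1 * g p.2)) := by
  ext m
  have hphase (a b : V) : 𝐞 (ω (a - m) (b - m)) = 𝐞 (-ω (a - b) m) * 𝐞 (ω a b) := by
    rw [← AddChar.map_add_eq_mul]
    congr 1
    have hmm : ω m m = 0 := hω.self_eq_zero m
    have hmb : -ω m b = ω b m := hω.neg m b
    simp only [map_sub, sub_apply]
    linear_combination hmm + hmb
  simp_rw [moyalProd, hphase, mul_smul]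
  rfl

variable [FiniteDimensional ℝ V] [BorelSpace V] [μ.IsAddHaarMeasure]

theorem exists_schwartzMap_moyalProd (hω : ω.toLinearMap₁₂.IsAlt)
    (hω' : ω.toLinearMap₁₂.SeparatingRight) (f g : 𝓢(V, ℂ)) :
    ∃ F : 𝓢(V, ℂ), ⇑F = moyalProd μ ω f g := by
  let twisted : 𝓢(V × V, ℂ) := SchwartzMap.smulLeftCLM ℂ (fun p : V × V ↦ (𝐞 (ω p.1 p.2) : ℂ))
    (schwartzExteriorProduct (ContinuousLinearMap.mul ℝ ℂ) f g)
  have htwisted : ⇑twisted = fun p ↦ 𝐞 (ω p.1 p.2) • (f p.1 * g p.2) :=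
    SchwartzMap.smulLeftCLM_apply (hasTemperateGrowth_fourierChar_bilinear ω) _
  refine ⟨schwartzFourierIntegral (μ.prod μ) (separatingRight_comp_fst_sub_snd hω') twisted, ?_⟩
  rw [moyalProd_eq_fourierIntegral hω, ← htwisted]
  rfl

theorem moyalProd_assoc_schwartzMap (hω : ω.toLinearMap₁₂.IsAlt)
    (hω' : ω.toLinearMap₁₂.SeparatingRight) (f g h : 𝓢(V, ℂ)) :
    moyalProd μ ω (moyalProd μ ω f g) h = moyalProd μ ω f (moyalProd μ ω g h) :=
  moyalProd_assoc hω f.integrable (schwartzFourierIntegral μ hω' f).integrable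
    g.integrable (schwartzFourierIntegral μ hω' g).integrable h.integrable
    (h.norm_le_seminorm ℝ)

end Moyal

section Plane

/-- The standard symplectic form on the plane `ℝ × ℝ`, as a continuous bilinear map so that it
can serve as the form of a Moyal product. -/
noncomputable def areaForm : ℝ × ℝ →L[ℝ] ℝ × ℝ →L[ℝ] ℝ :=
  (ContinuousLinearMap.mul ℝ ℝ).bilinearComp
      (ContinuousLinearMap.fst ℝ ℝ ℝ) (ContinuousLinearMap.snd ℝ ℝ ℝ) -
    (ContinuousLinearMap.mul ℝ ℝ).bilinearComp
      (ContinuousLinearMap.snd ℝ ℝ ℝ) (ContinuousLinearMap.fst ℝ ℝ ℝ)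

theorem areaForm_apply (a b : ℝ × ℝ) : areaForm a b = a.1 * b.2 - a.2 * b.1 := rfl

theorem isAlt_smul_areaForm (c : ℝ) : (c • areaForm).toLinearMap₁₂.IsAlt := fun a ↦ by
  simp [areaForm_apply, mul_comm]

theorem separatingRight_smul_areaForm {c : ℝ} (hc : c ≠ 0) :
    (c • areaForm).toLinearMap₁₂.SeparatingRight := fun b hb ↦ by
  have h₁ : b.1 = 0 := by simpa [areaForm_apply, hc] using hb (0, 1)
  have h₂ : b.2 = 0 := by simpa [areaForm_apply, hc] using hb (1, 0)
  exact Prod.ext h₁ h₂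

theorem heisKernel_eq_fourierChar (ℏ z : ℝ) (m a b : ℝ × ℝ) :
    heisKernel ℏ z m a b = 𝐞 (((2 * Real.pi * z * ℏ)⁻¹ • areaForm) (a - m) (b - m)) := by
  have hphase : 2 * Real.pi * ((2 * Real.pi * z * ℏ)⁻¹ * areaForm (a - m) (b - m)) =
      (z * ℏ)⁻¹ * areaForm (a - m) (b - m) := by
    field_simp
  rw [heisKernel, Real.fourierChar_apply, smul_apply, smul_apply, smul_eq_mul, hphase,
    areaForm_apply]
  push_cast [Prod.fst_sub, Prod.snd_sub]
  ring_nf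

theorem heisProd_eq_smul_moyalProd (ℏ z : ℝ) (f g : ℝ × ℝ → ℂ) :
    heisProd ℏ z f g = ((2 * Real.pi * z * ℏ) ^ 2)⁻¹ •
      moyalProd volume ((2 * Real.pi * z * ℏ)⁻¹ • areaForm) f g := by
  ext m
  simp_rw [heisProd, Pi.smul_apply, moyalProd, heisKernel_eq_fourierChar, Circle.smul_def,
    smul_eq_mul, mul_comm (f _ * g _)]
  rfl

end Plane

/-- For every  and fixed , the leafwise Heisenberg-dual product maps pairs of
Schwartz functions to Schwartz functions and is associative. -/
theorem heisProd_schwartz_and_assoc (ℏ : ℝ) (hℏ : 0 < ℏ) (z : ℝ) (hz : z ≠ 0) :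
    (∀ f g : SchwartzMap (ℝ × ℝ) ℂ,
      ∃ F : SchwartzMap (ℝ × ℝ) ℂ, ⇑F = heisProd ℏ z (⇑f) (⇑g)) ∧
    (∀ f g h : SchwartzMap (ℝ × ℝ) ℂ,
      heisProd ℏ z (heisProd ℏ z (⇑f) (⇑g)) (⇑h)
        = heisProd ℏ z (⇑f) (heisProd ℏ z (⇑g) (⇑h))) := by
  have hc : (2 * Real.pi * z * ℏ)⁻¹ ≠ 0 := by positivity
  have hAlt := isAlt_smul_areaForm (2 * Real.pi * z * ℏ)⁻¹
  have hSep := separatingRight_smul_areaForm hc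
  have hHaar : (volume : Measure (ℝ × ℝ)).IsAddHaarMeasure :=
    inferInstanceAs ((volume : Measure ℝ).prod volume).IsAddHaarMeasure
  refine ⟨fun f g ↦ ?_, fun f g h ↦ ?_⟩
  · obtain ⟨F, hF⟩ := exists_schwartzMap_moyalProd (μ := volume) hAlt hSep f g
    exact ⟨((2 * Real.pi * z * ℏ) ^ 2)⁻¹ • F, by
      rw [heisProd_eq_smul_moyalProd, ← hF]; rfl⟩
  · simp only [heisProd_eq_smul_moyalProd, moyalProd_smul_left, moyalProd_smul_right,
      moyalProd_assoc_schwartzMap hAlt hSep f g h]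
end

section
/- For every fixed real z ≠ 0, all Schwartz functions f, g : ℝ² → ℂ, and every point (x,y) ∈ ℝ², the commutator semiclassical asymptotics of the leafwise Heisenberg-dual product hold: lim_{ℏ → 0⁺} [ (f ⋆_{ℏ,z} g)(x,y) − (g ⋆_{ℏ,z} f)(x,y) ] / ℏ = 2iz·{f,g}(x,y). -/
open MeasureTheory Complex Filter

/-!
Both factors of the product are Schwartz functions, so for fixed `a` the integral over `b` is a
Fourier transform, evaluated at `w` with `a = m + 2πzℏ · i w` after identifying `ℝ²` with `ℂ`.
The substitution `a ↦ w` absorbs the prefactor and leaves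
`(f ⋆ g)(m) = ∫ f (m + ℏ · 2πz · i w) ĝ(w) dw`, where `ĝ` is the Fourier transform of `g` recentred
at `m`. This expression is differentiable at `ℏ = 0`: its value there is `f m * g m` by Fourier
inversion, and its derivative involves only first moments of `ĝ`, i.e. first derivatives of `g`
at `m`, which gives `i z {f, g}(m)`. The symmetric zeroth-order terms cancel in the commutator.
-/

open scoped FourierTransform SchwartzMap LineDeriv Topology

section FourierMoments

variable {V E : Type*} [NormedAddCommGroup V] [InnerProductSpace ℝ V] [FiniteDimensional ℝ V]
  [MeasurableSpace V] [BorelSpace V] [NormedAddCommGroup E] [NormedSpace ℂ E]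

lemma fourier_lineDeriv_apply (h : 𝓢(V, E)) (u w : V) :
    𝓕 (∂_{u} h) w = (2 * Real.pi * I) • ((inner ℝ u w : ℝ) : ℂ) • 𝓕 h w := by
  rw [SchwartzMap.fourier_lineDerivOp_eq, smul_apply,
    SchwartzMap.smulLeftCLM_apply_apply (by fun_prop), real_inner_comm, Complex.coe_smul]

lemma clm_smul_fourier {ι : Type*} [Fintype ι] (b : OrthonormalBasis ι ℝ V) (T : V →L[ℝ] ℂ)
    (h : 𝓢(V, E)) (w : V) :
    T w • 𝓕 h w = (2 * Real.pi * I : ℂ)⁻¹ • ∑ i, T (b i) • 𝓕 (∂_{b i} h) w := by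
  have hTw : T w = ∑ i, T (b i) * ((inner ℝ (b i) w : ℝ) : ℂ) := by
    conv_lhs => rw [← b.sum_repr' w, map_sum]
    simp only [map_smul, Complex.real_smul, mul_comm]
  simp only [fourier_lineDeriv_apply, smul_comm _ (2 * Real.pi * I : ℂ), ← Finset.smul_sum]
  rw [smul_inv_smul₀ two_pi_I_ne_zero, hTw, Finset.sum_smul]
  simp only [mul_smul]

variable [CompleteSpace E]

lemma integral_fourier_eq_apply_zero (h : 𝓢(V, E)) : ∫ w, 𝓕 h w = h 0 := by
  conv_rhs => rw [← FourierTransform.fourierInv_fourier_eq (F := 𝓢(V, E)) h,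
    SchwartzMap.fourierInv_coe, Real.fourierInv_eq']
  simp

lemma integral_clm_smul_fourier {ι : Type*} [Fintype ι] (b : OrthonormalBasis ι ℝ V)
    (T : V →L[ℝ] ℂ) (h : 𝓢(V, E)) :
    ∫ w, T w • 𝓕 h w = (2 * Real.pi * I : ℂ)⁻¹ • ∑ i, T (b i) • fderiv ℝ h 0 (b i) := by
  simp only [clm_smul_fourier b T]
  rw [integral_smul, integral_finsetSum _ fun i _ =>
    ((𝓕 (∂_{b i} h)).integrable (μ := volume)).smul (T (b i))]
  simp only [integral_smul, integral_fourier_eq_apply_zero, SchwartzMap.lineDerivOp_apply_eq_fderiv]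

end FourierMoments

section DilatedPairing

variable {V W E : Type*} [NormedAddCommGroup V] [NormedAddCommGroup W] [NormedSpace ℝ W]
  [NormedAddCommGroup E] [NormedSpace ℂ E]

lemma schwartz_exists_lipschitzWith {F : Type*} [NormedAddCommGroup F] [NormedSpace ℝ F]
    (k : 𝓢(W, F)) : ∃ K, LipschitzWith K k := by
  refine ⟨(SchwartzMap.seminorm ℝ 0 0 (SchwartzMap.fderivCLM ℝ W F k)).toNNReal,
    lipschitzWith_of_nnnorm_fderiv_le k.differentiable fun x => ?_⟩
  exact NNReal.le_toNNReal_of_coe_le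
    (SchwartzMap.norm_le_seminorm ℝ (SchwartzMap.fderivCLM ℝ W F k) x)

lemma hasDerivAt_integral_comp_smul_smul [NormedSpace ℝ V] [MeasurableSpace V]
    [OpensMeasurableSpace V] [SecondCountableTopology V] {μ : Measure V} {k : W → ℂ} {K : NNReal}
    (hk : LipschitzWith K k) (hk₀ : DifferentiableAt ℝ k 0) (L : V →L[ℝ] W) {φ : V → E}
    (hφ : Integrable φ μ) (hφ₁ : Integrable (fun w => ‖w‖ * ‖φ w‖) μ) :
    HasDerivAt (fun t : ℝ => ∫ w, k (t • L w) • φ w ∂μ) (∫ w, fderiv ℝ k 0 (L w) • φ w ∂μ) 0 := by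
  have lipschitz (w : V) : LipschitzOnWith (Real.nnabs (K * ‖L‖ * (‖w‖ * ‖φ w‖)))
      (fun t : ℝ => k (t • L w) • φ w) Set.univ := by
    refine LipschitzOnWith.of_dist_le_mul fun s _ t _ => ?_
    rw [Real.coe_nnabs, abs_of_nonneg (by positivity), dist_eq_norm, ← sub_smul, norm_smul]
    calc ‖k (s • L w) - k (t • L w)‖ * ‖φ w‖
        ≤ K * ‖s • L w - t • L w‖ * ‖φ w‖ := by gcongr; exact hk.norm_sub_le _ _
      _ = K * (‖s - t‖ * ‖L w‖) * ‖φ w‖ := by rw [← sub_smul, norm_smul]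
      _ ≤ K * (‖s - t‖ * (‖L‖ * ‖w‖)) * ‖φ w‖ := by gcongr; exact L.le_opNorm w
      _ = K * ‖L‖ * (‖w‖ * ‖φ w‖) * dist s t := by rw [dist_eq_norm]; ring
  have hasDeriv (w : V) :
      HasDerivAt (fun t : ℝ => k (t • L w) • φ w) (fderiv ℝ k 0 (L w) • φ w) 0 := by
    have line : HasDerivAt (fun t : ℝ => t • L w) (L w) 0 := by
      simpa using (hasDerivAt_id (0 : ℝ)).smul_const (L w)
    have hk₀' : HasFDerivAt k (fderiv ℝ k 0) ((0 : ℝ) • L w) := by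
      simpa using hk₀.hasFDerivAt
    exact (hk₀'.comp_hasDerivAt 0 line).smul_const (φ w)
  refine (hasDerivAt_integral_of_dominated_loc_of_lip Filter.univ_mem
    (Eventually.of_forall fun t => ?_) ?_ ?_ (ae_of_all μ lipschitz) (hφ₁.const_mul _)
    (ae_of_all μ hasDeriv)).2
  · exact (hk.continuous.comp (by fun_prop)).aestronglyMeasurable.smul hφ.aestronglyMeasurable
  · simpa only [zero_smul] using! hφ.smul (k 0)
  · exact (ContinuousLinearMap.continuous _ |>.comp L.continuous).aestronglyMeasurable.smul
      hφ.aestronglyMeasurable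

lemma hasDerivAt_integral_comp_smul_smul_fourier {ι : Type*} [Fintype ι] [InnerProductSpace ℝ V]
    [FiniteDimensional ℝ V] [MeasurableSpace V] [BorelSpace V] [CompleteSpace E]
    (b : OrthonormalBasis ι ℝ V) (L : V →L[ℝ] W) (k : 𝓢(W, ℂ)) (h : 𝓢(V, E)) :
    HasDerivAt (fun t : ℝ => ∫ w, k (t • L w) • 𝓕 h w)
      ((2 * Real.pi * I : ℂ)⁻¹ • ∑ i, fderiv ℝ k 0 (L (b i)) • fderiv ℝ h 0 (b i)) 0 := by
  obtain ⟨K, hK⟩ := schwartz_exists_lipschitzWith k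
  have moment : Integrable (fun w => ‖w‖ * ‖𝓕 h w‖) := by
    have := (𝓕 h).integrable_pow_mul volume 1
    simpa only [pow_one] using this
  have := hasDerivAt_integral_comp_smul_smul hK k.differentiableAt L (𝓕 h).integrable moment
  exact (integral_clm_smul_fourier b ((fderiv ℝ k 0).comp L) h) ▸ this

end DilatedPairing

section ComplexCoordinates

lemma integral_comp_complex_mul_left {E : Type*} [NormedAddCommGroup E] [NormedSpace ℝ E]
    {c : ℂ} (hc : c ≠ 0) (F : ℂ → E) : ∫ w, F (c * w) = (‖c‖ ^ 2)⁻¹ • ∫ v, F v := by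
  have hdet : (ContinuousLinearMap.mul ℝ ℂ c).det = ‖c‖ ^ 2 := by
    rw [← Complex.normSq_eq_norm_sq, ← Algebra.norm_complex_apply]
    rfl
  have key := integral_image_eq_integral_abs_det_fderiv_smul volume MeasurableSet.univ
    (fun w _ => (ContinuousLinearMap.mul ℝ ℂ c).hasFDerivWithinAt)
    (mul_right_injective₀ hc).injOn F
  have himage : ContinuousLinearMap.mul ℝ ℂ c '' Set.univ = Set.univ := by
    rw [Set.image_univ]
    exact (mulLeft_bijective₀ c hc).surjective.range_eq
  rw [himage, setIntegral_univ, setIntegral_univ, hdet, integral_smul,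
    abs_of_nonneg (by positivity)] at key
  rw [key, inv_smul_smul₀ (by positivity)]
  rfl

lemma integral_eq_integral_add_re_im {E : Type*} [NormedAddCommGroup E] [NormedSpace ℝ E]
    (m : ℝ × ℝ) (F : ℝ × ℝ → E) : ∫ a, F a = ∫ v : ℂ, F (m + (v.re, v.im)) := by
  rw [← integral_add_left_eq_self F m]
  exact (Complex.volume_preserving_equiv_real_prod.integral_comp' fun a => F (m + a)).symm

/-- The function `v ↦ f (m + (re v, im v))`, i.e. `f` read in the complex coordinate centred at
`m`. The plane is modelled by `ℂ` because the Fourier transform needs an inner product, which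
`ℝ × ℝ` (with its sup norm) does not carry. -/
noncomputable def recentre (m : ℝ × ℝ) (f : 𝓢(ℝ × ℝ, ℂ)) : 𝓢(ℂ, ℂ) :=
  SchwartzMap.compCLMOfContinuousLinearEquiv ℂ Complex.equivRealProdCLM
    (SchwartzMap.compSubConstCLM ℂ (-m) f)

lemma recentre_apply (m : ℝ × ℝ) (f : 𝓢(ℝ × ℝ, ℂ)) (v : ℂ) :
    recentre m f v = f (m + (v.re, v.im)) := by
  simp [recentre, add_comm]

lemma recentre_zero (m : ℝ × ℝ) (f : 𝓢(ℝ × ℝ, ℂ)) : recentre m f 0 = f m := by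
  rw [recentre_apply, zero_re, zero_im, Prod.mk_zero_zero, add_zero]

lemma fderiv_recentre_zero (m : ℝ × ℝ) (f : 𝓢(ℝ × ℝ, ℂ)) (v : ℂ) :
    fderiv ℝ (recentre m f) 0 v = v.re * pderivX f m + v.im * pderivY f m := by
  have hcomp : ⇑(recentre m f) = (fun a => f (m + a)) ∘ Complex.equivRealProdCLM := by
    ext v
    exact recentre_apply m f v
  have hv : Complex.equivRealProdCLM v = v.re • ((1 : ℝ), (0 : ℝ)) + v.im • ((0 : ℝ), (1 : ℝ)) := by
    simp
  rw [hcomp, ContinuousLinearEquiv.comp_right_fderiv, fderiv_comp_add_left,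
    ContinuousLinearMap.comp_apply, ContinuousLinearEquiv.coe_coe, hv, map_zero, add_zero,
    map_add, map_smul, map_smul, Complex.real_smul, Complex.real_smul, pderivX, pderivY]

end ComplexCoordinates

section HeisenbergProduct

lemma norm_heisKernel (ℏ z : ℝ) (m a b : ℝ × ℝ) : ‖heisKernel ℏ z m a b‖ = 1 := by
  simp [heisKernel, Complex.norm_exp, ← Complex.ofReal_mul, Complex.div_re]

lemma continuous_heisKernel (ℏ z : ℝ) (m : ℝ × ℝ) :
    Continuous fun ab : (ℝ × ℝ) × (ℝ × ℝ) => heisKernel ℏ z m ab.1 ab.2 := by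
  unfold heisKernel
  fun_prop

lemma integrable_mul_heisKernel (ℏ z : ℝ) (m : ℝ × ℝ) {f g : ℝ × ℝ → ℂ} (hf : Integrable f)
    (hg : Integrable g) :
    Integrable fun ab : (ℝ × ℝ) × (ℝ × ℝ) => f ab.1 * g ab.2 * heisKernel ℏ z m ab.1 ab.2 :=
  (hf.mul_prod hg).mul_bdd (continuous_heisKernel ℏ z m).aestronglyMeasurable
    (ae_of_all _ fun _ => (norm_heisKernel ℏ z m _ _).le)

lemma heisKernel_add_add (ℏ z : ℝ) (m : ℝ × ℝ) (a v : ℂ) :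
    heisKernel ℏ z m (m + (a.re, a.im)) (m + (v.re, v.im)) =
      Complex.exp (I / (z * ℏ) * (inner ℝ (I * a) v : ℝ)) := by
  have hinner : inner ℝ (I * a) v = a.re * v.im - v.re * a.im := by
    rw [Complex.inner, mul_re, conj_re, conj_im, I_mul_re, I_mul_im]
    ring
  simp only [heisKernel, Prod.fst_add, Prod.snd_add, add_sub_cancel_left, hinner]

lemma integral_mul_heisKernel (ℏ z : ℝ) (g : 𝓢(ℝ × ℝ, ℂ)) (m : ℝ × ℝ) (a : ℂ) :
    ∫ b, g b * heisKernel ℏ z m (m + (a.re, a.im)) b =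
      𝓕 (recentre m g) (-(2 * Real.pi * z * ℏ)⁻¹ • (I * a)) := by
  rw [integral_eq_integral_add_re_im m, SchwartzMap.fourier_coe, Real.fourier_eq']
  congr 1 with v
  rw [heisKernel_add_add, recentre_apply, smul_eq_mul, mul_comm, real_inner_smul_right,
    real_inner_comm]
  congr 2
  push_cast
  field_simp

lemma heisProd_eq_integral_fourier {ℏ z : ℝ} (hℏ : ℏ ≠ 0) (hz : z ≠ 0) (f g : 𝓢(ℝ × ℝ, ℂ))
    (m : ℝ × ℝ) :
    heisProd ℏ z f g m =
      ∫ w, recentre m f (ℏ • (2 * Real.pi * z * I * w)) * 𝓕 (recentre m g) w := by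
  have hℏ' : (ℏ : ℂ) ≠ 0 := mod_cast hℏ
  have hz' : (z : ℂ) ≠ 0 := mod_cast hz
  have hc : (2 * Real.pi * z * ℏ * I : ℂ) ≠ 0 := by simp [hℏ, hz, Real.pi_ne_zero]
  have hnorm : ‖(2 * Real.pi * z * ℏ * I : ℂ)‖ ^ 2 = (2 * Real.pi * z * ℏ) ^ 2 := by
    simp [mul_pow]
  unfold heisProd
  rw [Measure.volume_eq_prod, integral_prod _ (integrable_mul_heisKernel ℏ z m f.integrable
    g.integrable), integral_eq_integral_add_re_im m, ← hnorm, ← integral_comp_complex_mul_left hc]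
  congr 1 with w
  simp only [mul_assoc (f _)]
  rw [integral_const_mul, integral_mul_heisKernel, ← recentre_apply]
  congr 2
  · rw [Complex.real_smul]
    ring
  · rw [Complex.real_smul]
    push_cast
    field_simp
    rw [I_sq]
    ring

lemma hasDerivAt_integral_recentre_mul_fourier (z : ℝ) (f g : 𝓢(ℝ × ℝ, ℂ)) (m : ℝ × ℝ) :
    HasDerivAt (fun ℏ : ℝ =>
        ∫ w, recentre m f (ℏ • (2 * Real.pi * z * I * w)) * 𝓕 (recentre m g) w)
      (I * z * pbracket f g m) 0 := by
  have key := hasDerivAt_integral_comp_smul_smul_fourier Complex.orthonormalBasisOneI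
    (ContinuousLinearMap.mul ℝ ℂ (2 * Real.pi * z * I)) (recentre m f) (recentre m g)
  convert! key using 1
  have hf_one : fderiv ℝ (recentre m f) 0 (2 * Real.pi * z * I * 1) =
      2 * Real.pi * z * pderivY f m := by
    simp [fderiv_recentre_zero]
  have hf_I : fderiv ℝ (recentre m f) 0 (2 * Real.pi * z * I * I) =
      -(2 * Real.pi * z * pderivX f m) := by
    simp [fderiv_recentre_zero]
  have hg_one : fderiv ℝ (recentre m g) 0 1 = pderivX g m := by simp [fderiv_recentre_zero]
  have hg_I : fderiv ℝ (recentre m g) 0 I = pderivY g m := by simp [fderiv_recentre_zero]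
  simp only [coe_orthonormalBasisOneI, Fin.sum_univ_two, Matrix.cons_val_zero,
    Matrix.cons_val_one, ContinuousLinearMap.mul_apply', hf_one, hf_I, hg_one, hg_I, smul_eq_mul,
    pbracket]
  field_simp
  rw [I_sq]
  ring

lemma tendsto_heisProd_sub_mul_div {z : ℝ} (hz : z ≠ 0) (f g : 𝓢(ℝ × ℝ, ℂ)) (m : ℝ × ℝ) :
    Tendsto (fun ℏ : ℝ => (heisProd ℏ z f g m - f m * g m) / (ℏ : ℂ)) (𝓝[≠] 0)
      (𝓝 (I * z * pbracket f g m)) := by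
  refine (hasDerivAt_integral_recentre_mul_fourier z f g m).tendsto_slope_zero.congr' ?_
  filter_upwards [self_mem_nhdsWithin] with ℏ hℏ
  simp only [zero_add, zero_smul, recentre_zero]
  rw [← heisProd_eq_integral_fourier hℏ hz, integral_const_mul, integral_fourier_eq_apply_zero,
    recentre_zero, Complex.real_smul, ofReal_inv, div_eq_inv_mul]

lemma pbracket_swap (f g : ℝ × ℝ → ℂ) (m : ℝ × ℝ) : pbracket g f m = -pbracket f g m := by
  unfold pbracket
  ring

end HeisenbergProduct

/-- Commutator semiclassical asymptotics of the leafwise Heisenberg-dual product: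
`lim_{ℏ → 0⁺} [(f ⋆_{ℏ,z} g)(x,y) − (g ⋆_{ℏ,z} f)(x,y)]/ℏ = 2iz·{f,g}(x,y)`. -/
theorem heisProd_commutator (z : ℝ) (hz : z ≠ 0) (f g : SchwartzMap (ℝ × ℝ) ℂ) (m : ℝ × ℝ) :
    Tendsto (fun ℏ : ℝ => (heisProd ℏ z (⇑f) (⇑g) m - heisProd ℏ z (⇑g) (⇑f) m) / (ℏ : ℂ))
      (nhdsWithin 0 (Set.Ioi 0))
      (nhds (2 * Complex.I * (z : ℂ) * pbracket (⇑f) (⇑g) m)) := by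
  have hfg := (tendsto_heisProd_sub_mul_div hz f g m).mono_left (nhdsGT_le_nhdsNE 0)
  have hgf := (tendsto_heisProd_sub_mul_div hz g f m).mono_left (nhdsGT_le_nhdsNE 0)
  convert! hfg.sub hgf using 2
  · ring
  · rw [pbracket_swap f g]
    ring
end
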